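/- arXiv:1902.08817 — 2 statements merged into one kernel-verified Lean document; each statement's English description precedes it below -/
import Mathlib

section
/- Let p_n/q_n be the n-th continued fraction convergent of π, let v₂ = v₂(p_n) be the 2-adic valuation of p_n, and set x_n = ((2^(2+2v₂) + 1)/2^(2+2v₂))·π·p_n. Then |sin((2x_n + 1)·p_n)| is bounded above and below by positive absolute constants for all sufficiently large n; more precisely |sin((2x_n+1)p_n)| = |cos(p_n − π q_n)| → 1 as n → ∞. -/
open Real Filter

theorem aux_approx
    (p q : ℕ → ℕ)
    (hp : ∀ n, (p n : ℝ) = (GenContFract.of (π : ℝ)).nums n)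
    (hq : ∀ n, (q n : ℝ) = (GenContFract.of (π : ℝ)).dens n) (n : ℕ) :
    1 ≤ q n ∧ |(p n : ℝ) - π * (q n : ℝ)| ≤ 1 / ((n : ℝ) + 1) := by
  have ht : ∀ n, ¬ (GenContFract.of (π : ℝ)).TerminatedAt n := by
    intro n h
    obtain ⟨r, hr⟩ := (GenContFract.terminates_iff_rat π).1 ⟨n, h⟩
    exact irrational_pi ⟨r, hr.symm⟩
  have hfib : ∀ n, Nat.fib (n + 1) ≤ q n := by
    intro n
    have := GenContFract.succ_nth_fib_le_of_nth_den (v := π) (n := n) (Or.inr (ht _))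
    rw [← hq] at this
    exact_mod_cast this
  have h1 : 1 ≤ q n := le_trans (Nat.fib_pos.2 (Nat.succ_pos n)) (hfib n)
  have h2 : n + 1 ≤ q (n + 1) := by
    have := Nat.le_fib_add_one (n + 1 + 1)
    have := hfib (n + 1)
    omega
  refine ⟨h1, ?_⟩
  have h3 := GenContFract.abs_sub_convs_le (ht n)
  rw [GenContFract.conv_eq_num_div_den, ← hp, ← hq, ← hq] at h3
  have hq0 : (0 : ℝ) < q n := by exact_mod_cast h1
  have h2' : (n : ℝ) + 1 ≤ q (n + 1) := by exact_mod_cast h2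
  have hn : (0 : ℝ) < (n : ℝ) + 1 := by positivity
  have e : (p n : ℝ) - π * q n = -((π - p n / q n) * q n) := by field_simp; ring
  rw [e, abs_neg, abs_mul, abs_of_pos hq0]
  calc _ ≤ 1 / ((q n : ℝ) * q (n + 1)) * q n := by gcongr
    _ = 1 / (q (n + 1) : ℝ) := by field_simp
    _ ≤ _ := by gcongr

theorem aux_sin (p q : ℕ) (hp : p ≠ 0) (x : ℝ)
    (hx : x = ((2 ^ (2 + 2 * padicValNat 2 p) + 1 : ℝ) /
        (2 ^ (2 + 2 * padicValNat 2 p) : ℝ)) * π * (p : ℝ)) :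
    |Real.sin ((2 * x + 1) * (p : ℝ))| = |Real.cos ((p : ℝ) - π * (q : ℝ))| := by
  obtain ⟨m, hm⟩ := pow_padicValNat_dvd (p := 2) (n := p)
  have hodd : ¬ 2 ∣ m := by
    intro ⟨k, hk⟩
    apply pow_succ_padicValNat_not_dvd (p := 2) hp
    exact ⟨k, by rw [pow_succ, mul_assoc, ← hk]; exact hm⟩
  obtain ⟨j, hj⟩ : ∃ j, m = 2 * j + 1 := ⟨m / 2, by omega⟩
  generalize padicValNat 2 p = v at *
  have hm' : (p : ℝ) = 2 ^ v * (2 * j + 1) := by rw [hm, hj]; push_cast; ring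
  have e : (2 * x + 1) * (p : ℝ) = (p : ℝ) + π / 2 + ((p ^ 2 + j ^ 2 + j : ℕ) : ℝ) * (2 * π) := by
    have h0 : (2 : ℝ) ^ v ≠ 0 := by positivity
    have h1 : (2 : ℝ) ^ (2 + 2 * v) = 4 * (2 ^ v) ^ 2 := by ring
    rw [hx, h1]
    push_cast
    rw [hm']
    field_simp
    ring
  rw [e, Real.sin_add_nat_mul_two_pi, Real.sin_add_pi_div_two, mul_comm π, Real.cos_sub_nat_mul_pi,
    abs_mul, abs_pow]
  simp

/-- Let `p n / q n` be the `n`-th continued fraction convergent of `π`, let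
`v₂ = v₂(p n)` be the 2-adic valuation of `p n`, and set
`x n = ((2^(2+2v₂) + 1)/2^(2+2v₂))·π·(p n)`.  Then `|sin((2·x n + 1)·p n)|` is
bounded above and below by positive absolute constants for all sufficiently large `n`;
more precisely `|sin((2·x n+1)·p n)| = |cos(p n − π·q n)| → 1` as `n → ∞`. -/
theorem abs_sin_shift_bounded_and_tendsto_one
    (p q : ℕ → ℕ)
    (hp : ∀ n, (p n : ℝ) = (GenContFract.of (π : ℝ)).nums n)
    (hq : ∀ n, (q n : ℝ) = (GenContFract.of (π : ℝ)).dens n)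
    (x : ℕ → ℝ)
    (hx : ∀ n, x n =
      ((2 ^ (2 + 2 * padicValNat 2 (p n)) + 1 : ℝ) /
        (2 ^ (2 + 2 * padicValNat 2 (p n)) : ℝ)) * π * (p n : ℝ)) :
    (∃ c₁ c₂ : ℝ, 0 < c₁ ∧ 0 < c₂ ∧ ∃ N : ℕ, ∀ n : ℕ, N ≤ n →
      c₁ ≤ |Real.sin ((2 * x n + 1) * (p n : ℝ))| ∧
      |Real.sin ((2 * x n + 1) * (p n : ℝ))| ≤ c₂) ∧
    (∃ N : ℕ, ∀ n : ℕ, N ≤ n →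
      |Real.sin ((2 * x n + 1) * (p n : ℝ))| = |Real.cos ((p n : ℝ) - π * (q n : ℝ))|) ∧
    Tendsto (fun n : ℕ => |Real.sin ((2 * x n + 1) * (p n : ℝ))|) atTop (nhds 1) := by
  have hA := aux_approx p q hp hq
  have hp0 : ∀ n, p n ≠ 0 := by
    intro n h0
    obtain ⟨h1, h2⟩ := hA n
    have h1' : (1 : ℝ) ≤ q n := by exact_mod_cast h1
    rw [h0, Nat.cast_zero, zero_sub, abs_neg, abs_of_nonneg (by positivity)] at h2
    have h3 : 1 / ((n : ℝ) + 1) ≤ 1 := by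
      rw [div_le_one (by positivity)]
      have : (0 : ℝ) ≤ n := by positivity
      linarith
    nlinarith [Real.pi_gt_three]
  have hE : ∀ n, |Real.sin ((2 * x n + 1) * (p n : ℝ))| = |Real.cos ((p n : ℝ) - π * (q n : ℝ))| :=
    fun n => aux_sin (p n) (q n) (hp0 n) (x n) (hx n)
  have hT0 : Tendsto (fun n : ℕ => (p n : ℝ) - π * (q n : ℝ)) atTop (nhds 0) :=
    squeeze_zero_norm (fun n => (hA n).2) tendsto_one_div_add_atTop_nhds_zero_nat
  have hT : Tendsto (fun n : ℕ => |Real.sin ((2 * x n + 1) * (p n : ℝ))|) atTop (nhds 1) := by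
    simp_rw [hE]
    have := ((Real.continuous_cos.abs).tendsto 0).comp hT0
    simpa [Function.comp_def] using this
  refine ⟨⟨1 / 2, 1, by norm_num, by norm_num, ?_⟩, ⟨0, fun n _ => hE n⟩, hT⟩
  obtain ⟨N, hN⟩ := eventually_atTop.1 (hT.eventually (eventually_ge_nhds (b := (1 / 2 : ℝ)) (by norm_num)))
  exact ⟨N, fun n hn => ⟨hN n hn, Real.abs_sin_le_one _⟩⟩
end

section
/- There exists q₀ such that for all integers p and q with q ≥ q₀, the number π satisfies |π − p/q| ≥ 1/q^(7.6063). -/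
open Real

namespace Salikhov
section PNT
open MeasureTheory Filter Topology Set

/-- normalized Chebyshev function -/
noncomputable def BB (u : ℝ) : ℝ := Chebyshev.psi (Real.exp u) * Real.exp (-u)

lemma BB_nonneg (u : ℝ) : 0 ≤ BB u := mul_nonneg (Chebyshev.psi_nonneg _) (Real.exp_pos _).le

lemma BB_le (u : ℝ) : BB u ≤ Real.log 4 + 4 := by
  unfold BB
  have h := Chebyshev.psi_le_const_mul_self (Real.exp_pos u).le
  calc _ ≤ ((Real.log 4 + 4) * Real.exp u) * Real.exp (-u) := by gcongr
    _ = _ := by rw [mul_assoc, ← Real.exp_add]; simp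

lemma BB_zero {u : ℝ} (hu : u < 0) : BB u = 0 := by
  unfold BB
  have : ⌊Real.exp u⌋₊ = 0 := Nat.floor_eq_zero.2 (by simpa using hu)
  simp [Chebyshev.psi, this]

lemma BB_mono {u v : ℝ} (h : u ≤ v) : BB u * Real.exp (u - v) ≤ BB v := by
  unfold BB
  have h1 : Chebyshev.psi (Real.exp u) ≤ Chebyshev.psi (Real.exp v) :=
    Chebyshev.psi_mono (Real.exp_le_exp.2 h)
  calc _ = Chebyshev.psi (Real.exp u) * Real.exp (-v) := by
        rw [mul_assoc, ← Real.exp_add]; congr 2; ring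
    _ ≤ _ := by gcongr

lemma BB_meas : Measurable BB := by
  unfold BB
  exact (Chebyshev.psi_mono.measurable.comp Real.measurable_exp).mul
    (Real.measurable_exp.comp measurable_neg)

/-- the Fejér kernel -/
noncomputable def kk (x : ℝ) : ℝ := 2 * (1 - Real.cos x) / x ^ 2

lemma kk_nonneg (x : ℝ) : 0 ≤ kk x := by
  unfold kk
  have := Real.cos_le_one x
  apply div_nonneg <;> nlinarith [sq_nonneg x]

lemma kk_le (x : ℝ) : kk x ≤ 5 * (1 + x ^ 2)⁻¹ := by
  unfold kk
  have h1 := Real.neg_one_le_cos x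
  have h2 := Real.one_sub_sq_div_two_le_cos (x := x)
  rcases eq_or_ne x 0 with rfl | hx
  · simp
  have : 0 < x ^ 2 := by positivity
  rw [← div_eq_mul_inv, div_le_div_iff₀ (by positivity) (by positivity)]
  nlinarith

lemma kk_meas : Measurable kk := by
  unfold kk
  fun_prop

lemma kk_int : Integrable kk := by
  refine (integrable_inv_one_add_sq.const_mul 5).mono' kk_meas.aestronglyMeasurable ?_
  filter_upwards with x
  rw [Real.norm_of_nonneg (kk_nonneg x)]
  exact kk_le x

lemma kk_integral_pos : 0 < ∫ x, kk x := by
  rw [integral_pos_iff_support_of_nonneg kk_nonneg kk_int]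
  refine lt_of_lt_of_le ?_ (measure_mono (s := Ioo 1 2) ?_)
  · simp
  · intro x hx
    have : Real.cos x < 1 := by
      rw [← Real.cos_zero]
      apply Real.cos_lt_cos_of_nonneg_of_le_pi le_rfl _ (by linarith [hx.1])
      linarith [hx.2, Real.pi_gt_three]
    have h0 : 0 < x := by linarith [hx.1]
    have : 0 < kk x := by
      unfold kk
      apply div_pos _ (by positivity)
      linarith
    exact this.ne'

lemma kk_fourier {x : ℝ} (hx : x ≠ 0) :
    ∫ t in (-1 : ℝ)..1, ((1 - |t| : ℝ) : ℂ) * Complex.exp (Complex.I * t * x) = kk x := by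
  have hxc : (x : ℂ) ≠ 0 := by exact_mod_cast hx
  have hI := Complex.I_ne_zero
  have cont : Continuous (fun t : ℝ => ((1 - |t| : ℝ) : ℂ) * Complex.exp (Complex.I * t * x)) := by
    fun_prop
  rw [← intervalIntegral.integral_add_adjacent_intervals (b := 0)
    (cont.intervalIntegrable _ _) (cont.intervalIntegrable _ _)]
  have hE : ∀ t : ℝ, HasDerivAt (fun t : ℝ => Complex.exp (Complex.I * t * x))
      (Complex.exp (Complex.I * t * x) * (Complex.I * x)) t := by
    intro t
    have h1 : HasDerivAt (fun t : ℝ => Complex.I * (t : ℂ) * x) (Complex.I * x) t := by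
      have := ((Complex.ofRealCLM.hasDerivAt (x := t)).const_mul Complex.I).mul_const (x : ℂ)
      simpa using this
    exact h1.cexp
  have hT : ∀ t : ℝ, HasDerivAt (fun t : ℝ => (t : ℂ)) 1 t := fun t =>
    (hasDerivAt_id t).ofReal_comp
  have e1 : ∫ t in (-1 : ℝ)..0, ((1 - |t| : ℝ) : ℂ) * Complex.exp (Complex.I * t * x)
      = ∫ t in (-1 : ℝ)..0, (1 + (t : ℂ)) * Complex.exp (Complex.I * t * x) := by
    apply intervalIntegral.integral_congr
    intro t ht
    rw [uIcc_of_le (by norm_num)] at ht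
    simp only
    rw [abs_of_nonpos ht.2]; push_cast; ring
  have e2 : ∫ t in (0 : ℝ)..1, ((1 - |t| : ℝ) : ℂ) * Complex.exp (Complex.I * t * x)
      = ∫ t in (0 : ℝ)..1, (1 - (t : ℂ)) * Complex.exp (Complex.I * t * x) := by
    apply intervalIntegral.integral_congr
    intro t ht
    rw [uIcc_of_le (by norm_num)] at ht
    simp only
    rw [abs_of_nonneg ht.1]; push_cast; ring
  rw [e1, e2]
  rw [intervalIntegral.integral_eq_sub_of_hasDerivAt
    (f := fun t : ℝ => (1 + (t : ℂ)) * Complex.exp (Complex.I * t * x) / (Complex.I * x)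
      + Complex.exp (Complex.I * t * x) / (x : ℂ) ^ 2) (fun t _ => ?_)
      (Continuous.intervalIntegrable (by fun_prop) _ _)]
  rw [intervalIntegral.integral_eq_sub_of_hasDerivAt
    (f := fun t : ℝ => (1 - (t : ℂ)) * Complex.exp (Complex.I * t * x) / (Complex.I * x)
      - Complex.exp (Complex.I * t * x) / (x : ℂ) ^ 2) (fun t _ => ?_)
      (Continuous.intervalIntegrable (by fun_prop) _ _)]
  · unfold kk
    push_cast
    rw [Complex.cos]
    have a1 : Complex.I * 1 * (x : ℂ) = x * Complex.I := by ring
    have a2 : Complex.I * (-1) * (x : ℂ) = -x * Complex.I := by ring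
    rw [a1, a2]
    simp
    field_simp
    ring
  · have h := ((((hT t).const_sub 1).mul (hE t)).div_const (Complex.I * x)).sub
      ((hE t).div_const ((x : ℂ) ^ 2))
    refine h.congr_deriv ?_
    field_simp
    linear_combination (-1) * Complex.I_sq
  · have h := ((((hT t).const_add 1).mul (hE t)).div_const (Complex.I * x)).add
      ((hE t).div_const ((x : ℂ) ^ 2))
    refine h.congr_deriv ?_
    field_simp
    linear_combination (1) * Complex.I_sq

end PNT
end Salikhov

namespace Salikhov
section PNT
open MeasureTheory Filter Topology Set

/-- regularised logarithmic derivative -/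
noncomputable def GG (s : ℂ) : ℂ :=
  (ArithmeticFunction.vonMangoldt.LFunctionResidueClassAux (1 : ZMod 1) s - 1) / s

lemma GG_cont : ContinuousOn GG {s | 1 ≤ s.re} := by
  unfold GG
  apply ContinuousOn.div
  · exact (ArithmeticFunction.vonMangoldt.continuousOn_LFunctionResidueClassAux _).sub
      continuousOn_const
  · exact continuousOn_id
  · intro s hs h
    simp only [mem_setOf_eq] at hs
    rw [h] at hs; simp at hs; linarith

lemma int_exp {s : ℂ} (hs : 1 < s.re) :
    IntegrableOn (fun u : ℝ => Complex.exp ((1 - s) * u)) (Ioi 0) :=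
  integrableOn_exp_mul_complex_Ioi (by simpa using hs) 0

lemma int_BB {s : ℂ} (hs : 1 < s.re) :
    IntegrableOn (fun u : ℝ => (BB u : ℂ) * Complex.exp ((1 - s) * u)) (Ioi 0) := by
  refine (int_exp hs).bdd_mul (c := Real.log 4 + 4) ?_ ?_
  · exact (Complex.measurable_ofReal.comp BB_meas).aestronglyMeasurable
  · filter_upwards with u
    rw [Complex.norm_real, Real.norm_of_nonneg (BB_nonneg u)]
    exact BB_le u

lemma lseries_eq {s : ℂ} (hs : 1 < s.re) :
    LSeries (fun n => ((ArithmeticFunction.vonMangoldt n : ℝ) : ℂ)) s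
      = s * ∫ u in Ioi (0 : ℝ), (BB u : ℂ) * Complex.exp ((1 - s) * u) := by
  rw [LSeries_eq_mul_integral_of_nonneg (fun n => ArithmeticFunction.vonMangoldt n) (r := 1)
    zero_le_one hs ?_ (fun n => ArithmeticFunction.vonMangoldt_nonneg)]
  · congr 1
    rw [← Real.exp_zero, ← integral_comp_exp_Ioi]
    apply setIntegral_congr_fun measurableSet_Ioi
    intro u hu
    simp only [BB, Chebyshev.psi]
    have e : Finset.Icc 1 ⌊Real.exp u⌋₊ = Finset.Ioc 0 ⌊Real.exp u⌋₊ := by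
      ext; simp [Nat.succ_le_iff, Nat.pos_iff_ne_zero]
    rw [e, Complex.real_smul]
    have e2 : ((Real.exp u : ℝ) : ℂ) ^ (-(s + 1)) = Complex.exp (- (s + 1) * u) := by
      rw [Complex.ofReal_exp, Complex.cpow_def_of_ne_zero (Complex.exp_ne_zero _),
        ← Complex.ofReal_exp, ← Complex.ofReal_log (Real.exp_pos u).le, Real.log_exp]
      congr 1; ring
    rw [e2]
    push_cast
    have e3 : Complex.exp ((1 - s) * u) = Complex.exp u * Complex.exp (-(s+1) * u)
       * Complex.exp u := by
      rw [← Complex.exp_add, ← Complex.exp_add]; congr 1; ring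
    have e4 : Complex.exp (-(u:ℂ)) * Complex.exp u = 1 := by rw [← Complex.exp_add]; simp
    rw [e3]
    linear_combination (-(∑ i ∈ Finset.Ioc 0 ⌊Real.exp u⌋₊, ((ArithmeticFunction.vonMangoldt i : ℝ):ℂ))
      * Complex.exp u * Complex.exp (-(s + 1) * u)) * e4
  · refine Asymptotics.IsBigO.of_bound (Real.log 4 + 4) ?_
    filter_upwards with n
    have := Chebyshev.psi_le_const_mul_self (x := n) (by positivity)
    simp only [Chebyshev.psi, Nat.floor_natCast] at this
    have e : Finset.Icc 1 n = Finset.Ioc 0 n := by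
      ext; simp [Nat.succ_le_iff, Nat.pos_iff_ne_zero]
    rw [e, Real.rpow_one, Real.norm_of_nonneg (Finset.sum_nonneg fun i _ =>
      ArithmeticFunction.vonMangoldt_nonneg), Real.norm_of_nonneg (by positivity)]
    exact this

lemma laplace_eq {s : ℂ} (hs : 1 < s.re) :
    ∫ u in Ioi (0 : ℝ), ((BB u - 1 : ℝ) : ℂ) * Complex.exp ((1 - s) * u) = GG s := by
  have h1 : s ≠ 0 := by rintro rfl; simp at hs; linarith
  have h2 : s - 1 ≠ 0 := by
    intro h; have : s = 1 := by linear_combination h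
    rw [this] at hs; simp at hs
  have h3 : 1 - s ≠ 0 := by intro h; apply h2; linear_combination -h
  have hL := ArithmeticFunction.vonMangoldt.eqOn_LFunctionResidueClassAux
    (q := 1) (a := 1) isUnit_one (show s ∈ {s : ℂ | 1 < s.re} from hs)
  have e0 : (fun n => ((ArithmeticFunction.vonMangoldt.residueClass (1 : ZMod 1) n : ℝ) : ℂ))
      = (fun n => ((ArithmeticFunction.vonMangoldt n : ℝ) : ℂ)) := by
    ext n
    congr 1
    apply Set.indicator_of_mem
    exact Subsingleton.elim _ _
  simp only [e0, Nat.totient_one, lseries_eq hs] at hL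
  have e1 : ∫ u in Ioi (0 : ℝ), ((BB u - 1 : ℝ) : ℂ) * Complex.exp ((1 - s) * u)
      = (∫ u in Ioi (0 : ℝ), (BB u : ℂ) * Complex.exp ((1 - s) * u))
        - ∫ u in Ioi (0 : ℝ), Complex.exp ((1 - s) * u) := by
    rw [← integral_sub (int_BB hs) (int_exp hs)]
    congr 1; ext u; push_cast; ring
  rw [e1, integral_exp_mul_complex_Ioi (by simpa using hs), GG, hL]
  simp
  field_simp
  ring

lemma int_prod {s : ℂ} (hs : 1 < s.re) :
    IntegrableOn (fun u : ℝ => ((BB u - 1 : ℝ) : ℂ) * Complex.exp ((1 - s) * u)) (Ioi 0) := by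
  have := (int_BB hs).sub (int_exp hs)
  refine this.congr ?_
  filter_upwards with u
  simp; ring

lemma fubini_eq {d : ℝ} (hd : 0 < d) {l : ℝ} (hl : 0 < l) (y : ℝ) :
    ∫ u in Ioi (0 : ℝ), ((BB u - 1 : ℝ) : ℂ) * Complex.exp (-d * u) * (kk (l * (u - y)) : ℂ)
      = ∫ t in Ioc (-1 : ℝ) 1, ((1 - |t| : ℝ) : ℂ) * Complex.exp (-(Complex.I * l * t * y))
          * GG (1 + d - Complex.I * l * t) := by
  have hs : 1 < ((1 + d : ℝ) : ℂ).re := by simpa using hd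
  have I1 := int_prod hs
  have key := integral_integral_swap (μ := volume.restrict (Ioi (0:ℝ)))
    (ν := volume.restrict (Ioc (-1 : ℝ) 1))
    (f := fun u t => (((BB u - 1 : ℝ) : ℂ) * Complex.exp (-d * u)) *
      (((1 - |t| : ℝ) : ℂ) * Complex.exp (Complex.I * t * (l * (u - y) : ℝ)))) ?_
  · have a : ∀ᵐ u ∂(volume.restrict (Ioi (0:ℝ))), u ≠ y := by
      apply ae_restrict_of_ae
      exact (measure_singleton y : volume ({y} : Set ℝ) = 0) |> fun h => by
        rw [ae_iff]; simpa using h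
    calc _ = ∫ u in Ioi (0 : ℝ), ∫ t in Ioc (-1 : ℝ) 1,
            (((BB u - 1 : ℝ) : ℂ) * Complex.exp (-d * u)) *
      (((1 - |t| : ℝ) : ℂ) * Complex.exp (Complex.I * t * (l * (u - y) : ℝ))) := by
          apply integral_congr_ae
          filter_upwards [a] with u hu
          rw [integral_const_mul, ← intervalIntegral.integral_of_le (by norm_num),
            kk_fourier (mul_ne_zero hl.ne' (sub_ne_zero.2 hu))]
      _ = _ := key
      _ = _ := by
          apply setIntegral_congr_fun measurableSet_Ioc
          intro t ht
          have hs2 : 1 < (1 + d - Complex.I * l * t : ℂ).re := by simpa using hd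
          simp only
          rw [← laplace_eq hs2, ← integral_const_mul]
          congr 1
          ext u
          have : Complex.exp (-d * u) * Complex.exp (Complex.I * t * (l * (u - y) : ℝ))
            = Complex.exp (-(Complex.I * l * t * y)) *
              Complex.exp ((1 - (1 + d - Complex.I * l * t)) * u) := by
            rw [← Complex.exp_add, ← Complex.exp_add]; congr 1; push_cast; ring
          linear_combination ((BB u - 1 : ℝ) : ℂ) * ((1 - |t| : ℝ) : ℂ) * this
  · have I2 : IntegrableOn (fun t : ℝ => ((1 - |t| : ℝ) : ℂ)) (Ioc (-1) 1) :=
      (Continuous.integrableOn_Icc (by fun_prop)).mono_set Ioc_subset_Icc_self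
    have I3 := (I1.mul_prod I2).mul_bdd (c := 1)
      (g := fun z : ℝ × ℝ => Complex.exp (Complex.I * z.2 * (l * (z.1 - y) : ℝ))) ?_ ?_
    · refine I3.congr ?_
      filter_upwards with z
      simp only [Function.uncurry]
      have : (1 - ((1 + d : ℝ) : ℂ)) * z.1 = - d * z.1 := by push_cast; ring
      rw [this]; ring
    · apply Continuous.aestronglyMeasurable; fun_prop
    · filter_upwards with z
      rw [Complex.norm_exp]; simp

end PNT
end Salikhov

namespace Salikhov
section PNT
open MeasureTheory Filter Topology Set

lemma kk_int_comp {l : ℝ} (hl : 0 < l) (y : ℝ) : Integrable (fun u => kk (l * (u - y))) :=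
  (kk_int.comp_mul_left' hl.ne').comp_sub_right y

lemma BB_sub_norm (u : ℝ) : |BB u - 1| ≤ Real.log 4 + 4 := by
  have := BB_nonneg u
  have := BB_le u
  have : 0 < Real.log 4 := Real.log_pos (by norm_num)
  rw [abs_le]; constructor <;> linarith

lemma limit_eq {l : ℝ} (hl : 0 < l) (y : ℝ) :
    ∫ u in Ioi (0 : ℝ), ((BB u - 1 : ℝ) : ℂ) * (kk (l * (u - y)) : ℂ)
      = ∫ t in Ioc (-1 : ℝ) 1, ((1 - |t| : ℝ) : ℂ) * Complex.exp (-(Complex.I * l * t * y))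
          * GG (1 - Complex.I * l * t) := by
  have hd : Tendsto (fun n : ℕ => (1 : ℝ) / (n + 1)) atTop (𝓝 0) :=
    tendsto_one_div_add_atTop_nhds_zero_nat
  have hpos : ∀ n : ℕ, 0 < (1 : ℝ) / (n + 1) := fun n => by positivity
  have hle : ∀ n : ℕ, (1 : ℝ) / (n + 1) ≤ 1 := fun n => by
    rw [div_le_one (by positivity)]; linarith [(Nat.cast_nonneg n : (0:ℝ) ≤ n)]
  have h1 : Tendsto (fun n : ℕ => ∫ u in Ioi (0 : ℝ), ((BB u - 1 : ℝ) : ℂ) *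
      Complex.exp (-((1 / (n + 1) : ℝ) : ℂ) * u) * (kk (l * (u - y)) : ℂ)) atTop
      (𝓝 (∫ u in Ioi (0 : ℝ), ((BB u - 1 : ℝ) : ℂ) * (kk (l * (u - y)) : ℂ))) := by
    apply tendsto_integral_of_dominated_convergence
      (fun u => (Real.log 4 + 4) * kk (l * (u - y)))
    · intro n
      apply Measurable.aestronglyMeasurable
      refine Measurable.mul (Measurable.mul ?_ (by fun_prop)) ?_
      · exact Complex.measurable_ofReal.comp (BB_meas.sub_const 1)
      · exact Complex.measurable_ofReal.comp (kk_meas.comp (by fun_prop))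
    · exact ((kk_int_comp hl y).const_mul _).integrableOn
    · intro n
      refine (ae_restrict_iff' measurableSet_Ioi).2 (Eventually.of_forall fun u hu => ?_)
      rw [norm_mul, norm_mul, Complex.norm_real, Complex.norm_real,
        Real.norm_of_nonneg (kk_nonneg _), Real.norm_eq_abs, Complex.norm_exp]
      have h2 : rexp (-((1 / (n + 1) : ℝ) : ℂ) * u).re ≤ 1 := by
        rw [← Complex.ofReal_neg, ← Complex.ofReal_mul, Complex.ofReal_re]
        apply Real.exp_le_one_iff.2
        have : 0 < (1:ℝ) / (n+1) * u := mul_pos (hpos n) hu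
        linarith
      have h3 := BB_sub_norm u
      have h4 := kk_nonneg (l * (u - y))
      have h5 : |BB u - 1| * rexp (-((1 / (n + 1) : ℝ) : ℂ) * u).re ≤ Real.log 4 + 4 :=
        (mul_le_of_le_one_right (abs_nonneg _) h2).trans h3
      exact mul_le_mul_of_nonneg_right h5 h4
    · filter_upwards with u
      refine Tendsto.mul_const _ ?_
      have : Tendsto (fun n : ℕ => Complex.exp (-((1 / (n + 1) : ℝ) : ℂ) * u)) atTop
          (𝓝 (Complex.exp (-((0 : ℝ) : ℂ) * u))) := by
        have hc : Continuous (fun x : ℝ => Complex.exp (-((x : ℝ) : ℂ) * u)) := by fun_prop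
        exact (hc.tendsto 0).comp hd
      simpa using this.const_mul ((BB u - 1 : ℝ) : ℂ)
  have h2 : Tendsto (fun n : ℕ => ∫ t in Ioc (-1 : ℝ) 1, ((1 - |t| : ℝ) : ℂ) *
      Complex.exp (-(Complex.I * l * t * y)) * GG (1 + ((1 / (n + 1) : ℝ) : ℂ) - Complex.I * l * t))
      atTop (𝓝 (∫ t in Ioc (-1 : ℝ) 1, ((1 - |t| : ℝ) : ℂ) *
        Complex.exp (-(Complex.I * l * t * y)) * GG (1 - Complex.I * l * t))) := by
    let K : Set (ℝ × ℝ) := Icc 0 1 ×ˢ Icc (-1) 1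
    have hK : IsCompact K := isCompact_Icc.prod isCompact_Icc
    have hc : ContinuousOn (fun z : ℝ × ℝ => GG (1 + (z.1 : ℂ) - Complex.I * l * z.2)) K := by
      apply GG_cont.comp (by fun_prop)
      intro z hz
      have : 0 ≤ z.1 := hz.1.1
      simpa using this
    obtain ⟨C, hC⟩ := hK.exists_bound_of_continuousOn hc
    apply tendsto_integral_of_dominated_convergence (fun t => C)
    · intro n
      apply ContinuousOn.aestronglyMeasurable _ measurableSet_Ioc
      apply ContinuousOn.mul (by fun_prop)
      apply GG_cont.comp (by fun_prop)
      intro t _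
      have := (hpos n).le
      change 1 ≤ (1 + ((1 / (n + 1) : ℝ) : ℂ) - Complex.I * l * t).re
      rw [Complex.sub_re, Complex.add_re, Complex.ofReal_re]
      simp
      simpa using this
    · exact integrableOn_const (by simp)
    · intro n
      refine (ae_restrict_iff' measurableSet_Ioc).2 (Eventually.of_forall fun t ht => ?_)
      have hb := hC ((1 / (n+1) : ℝ), t) ⟨⟨(hpos n).le, hle n⟩, ⟨ht.1.le, ht.2⟩⟩
      rw [norm_mul, norm_mul, Complex.norm_real, Complex.norm_exp]
      have e1 : rexp (-(Complex.I * l * t * y)).re = 1 := by simp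
      have e2 : ‖1 - |t|‖ ≤ 1 := by
        rw [Real.norm_eq_abs, abs_le]
        have : |t| ≤ 1 := abs_le.2 ⟨ht.1.le, ht.2⟩
        constructor <;> linarith [abs_nonneg t]
      rw [e1, mul_one]
      exact (mul_le_of_le_one_left (norm_nonneg _) e2).trans hb
    · refine (ae_restrict_iff' measurableSet_Ioc).2 (Eventually.of_forall fun t ht => ?_)
      refine Tendsto.const_mul _ ?_
      have hct := hc (0, t) ⟨by simp, ⟨ht.1.le, ht.2⟩⟩
      have hm : Tendsto (fun n : ℕ => ((1 / (n + 1) : ℝ), t)) atTop (𝓝[K] (0, t)) := by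
        refine tendsto_nhdsWithin_iff.2 ⟨?_, Eventually.of_forall fun n => ?_⟩
        swap
        · exact ⟨⟨(hpos n).le, hle n⟩, ⟨ht.1.le, ht.2⟩⟩
        exact hd.prodMk_nhds tendsto_const_nhds
      have := hct.tendsto.comp hm
      simpa [Function.comp_def] using this
  refine tendsto_nhds_unique h1 (h2.congr fun n => ?_)
  rw [fubini_eq (hpos n) hl y]

lemma tendsto_zero {l : ℝ} (hl : 0 < l) :
    Tendsto (fun y => ∫ u in Ioi (0 : ℝ), (BB u - 1) * kk (l * (u - y))) atTop (𝓝 0) := by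
  have h1 := Real.tendsto_integral_exp_smul_cocompact
    ((Ioc (-1 : ℝ) 1).indicator fun t => ((1 - |t| : ℝ) : ℂ) * GG (1 - Complex.I * l * t))
  have h2 : Tendsto (fun y : ℝ => l * y / (2 * π)) atTop (cocompact ℝ) := by
    refine Tendsto.mono_right ?_ atTop_le_cocompact
    exact (tendsto_id.const_mul_atTop hl).atTop_div_const (by positivity)
  have h3 := h1.comp h2
  have h4 : Tendsto (fun y => ∫ u in Ioi (0 : ℝ), ((BB u - 1 : ℝ) : ℂ) * (kk (l * (u - y)) : ℂ))
      atTop (𝓝 0) := by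
    refine h3.congr fun y => ?_
    rw [limit_eq hl y, ← integral_indicator measurableSet_Ioc]
    simp only [Function.comp]
    congr 1
    ext t
    by_cases ht : t ∈ Ioc (-1 : ℝ) 1
    · rw [indicator_of_mem ht, indicator_of_mem ht, Circle.smul_def, Real.fourierChar_apply,
        smul_eq_mul]
      have : (2 * π * (-(t * (l * y / (2 * π)))) : ℝ) = -(l * t * y) := by
        field_simp
      rw [this]
      have e : (((-(l * t * y) : ℝ)) : ℂ) * Complex.I = -(Complex.I * l * t * y) := by
        push_cast; ring
      rw [e]; ring
    · rw [indicator_of_notMem ht, indicator_of_notMem ht]; simp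
  have h5 := (Complex.continuous_re.tendsto _).comp h4
  simp only [Complex.zero_re] at h5
  refine h5.congr fun y => ?_
  simp only [Function.comp, ← Complex.ofReal_mul]
  rw [integral_complex_ofReal, Complex.ofReal_re]

lemma BBkk_int {l : ℝ} (hl : 0 < l) (y : ℝ) : Integrable (fun u => BB u * kk (l * (u - y))) := by
  refine (kk_int_comp hl y).bdd_mul (c := Real.log 4 + 4) BB_meas.aestronglyMeasurable ?_
  filter_upwards with u
  rw [Real.norm_of_nonneg (BB_nonneg u)]
  exact BB_le u

lemma conv_tendsto {l : ℝ} (hl : 0 < l) :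
    Tendsto (fun y => ∫ x, BB (y + x / l) * kk x) atTop (𝓝 (∫ x, kk x)) := by
  have h0 := tendsto_zero hl
  have e1 : ∀ y, ∫ u in Ioi (0 : ℝ), (BB u - 1) * kk (l * (u - y))
      = l⁻¹ * (∫ x, BB (y + x / l) * kk x) - l⁻¹ * ∫ x in Ioi (-(l * y)), kk x := by
    intro y
    have i1 := (BBkk_int hl y).integrableOn (s := Ioi 0)
    have i2 := (kk_int_comp hl y).integrableOn (s := Ioi 0)
    have : ∀ u, (BB u - 1) * kk (l * (u - y)) = BB u * kk (l * (u - y)) - kk (l * (u - y)) := by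
      intro u; ring
    simp only [this]
    rw [integral_sub i1 i2]
    congr 1
    · rw [← integral_Ici_eq_integral_Ioi, setIntegral_eq_integral_of_forall_compl_eq_zero]
      · have := Measure.integral_comp_mul_left (fun x => BB (y + x / l) * kk x) l
        rw [abs_of_pos (by positivity), smul_eq_mul] at this
        rw [← this, ← integral_sub_right_eq_self (fun x => BB (y + l * x / l) * kk (l * x)) y]
        congr 1; ext u
        congr 2
        field_simp; ring
      · intro u hu
        rw [BB_zero (by simpa using hu), zero_mul]
    · have a1 := integral_comp_mul_left_Ioi (fun x => kk x) (-y) hl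
      rw [smul_eq_mul] at a1
      rw [show -(l * y) = l * (-y) by ring, ← a1]
      have := (measurePreserving_sub_right volume y).setIntegral_preimage_emb
        (measurableEmbedding_subRight y) (fun x => kk (l * x)) (Ioi (-y))
      rw [← this]
      congr 2
      ext u; simp
  have h1 : Tendsto (fun y : ℝ => ∫ x in Ioi (-(l * y)), kk x) atTop (𝓝 (∫ x, kk x)) := by
    have hb : Tendsto (fun y : ℝ => -(l * y)) atTop atBot :=
      tendsto_neg_atTop_atBot.comp (tendsto_id.const_mul_atTop hl)
    have c := AECover.integral_tendsto_of_countably_generated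
      (φ := fun y : ℝ => Ioi (-(l * y))) (aecover_Ioi hb) kk_int
    exact c
  have h2 := ((h0.congr e1).const_mul l).add h1
  simp only [mul_zero, zero_add] at h2
  refine h2.congr fun y => ?_
  field_simp
  ring
end PNT
end Salikhov

namespace Salikhov
section PNT
open MeasureTheory Filter Topology Set

lemma BBkk_int' (l y : ℝ) : Integrable (fun x => BB (y + x / l) * kk x) := by
  refine kk_int.bdd_mul (c := Real.log 4 + 4) ?_ ?_
  · exact (BB_meas.comp (by fun_prop)).aestronglyMeasurable
  filter_upwards with u
  rw [Real.norm_of_nonneg (BB_nonneg _)]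
  exact BB_le _

lemma tauber_upper {l A : ℝ} (hl : 0 < l) (y : ℝ) :
    BB y * Real.exp (-(2 * A / l)) * ∫ x in Icc (-A) A, kk x
      ≤ ∫ x, BB (y + A / l + x / l) * kk x := by
  rw [← integral_const_mul]
  refine le_trans ?_ (setIntegral_le_integral (s := Icc (-A) A) (BBkk_int' l _)
    (Eventually.of_forall fun x => mul_nonneg (BB_nonneg _) (kk_nonneg _)))
  refine setIntegral_mono_on ((kk_int.const_mul _).integrableOn) (BBkk_int' l _).integrableOn
    measurableSet_Icc fun x hx => ?_
  refine mul_le_mul_of_nonneg_right ?_ (kk_nonneg _)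
  have h1 : 0 ≤ (A + x) / l := div_nonneg (by linarith [hx.1]) hl.le
  have h2 : (A + x) / l ≤ 2 * A / l := by gcongr; linarith [hx.2]
  have h3 : (A + x) / l = A / l + x / l := by ring
  refine le_trans ?_ (BB_mono (u := y) (by linarith))
  refine mul_le_mul_of_nonneg_left (Real.exp_le_exp.2 (by linarith)) (BB_nonneg _)

lemma tauber_lower {l A : ℝ} (hl : 0 < l) (y : ℝ) :
    ∫ x, BB (y - A / l + x / l) * kk x
     ≤ BB y * Real.exp (2 * A / l) * (∫ x in Icc (-A) A, kk x)
      + (Real.log 4 + 4) * ((∫ x, kk x) - ∫ x in Icc (-A) A, kk x) := by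
  have e1 := integral_add_compl (μ := volume) (s := Icc (-A) A) measurableSet_Icc kk_int
  rw [← integral_add_compl (μ := volume) (s := Icc (-A) A) measurableSet_Icc (BBkk_int' l _)]
  rw [show (∫ x, kk x) - ∫ x in Icc (-A) A, kk x = ∫ x in (Icc (-A) A)ᶜ, kk x by linarith]
  rw [← integral_const_mul, ← integral_const_mul]
  apply add_le_add
  · refine setIntegral_mono_on (BBkk_int' l _).integrableOn ((kk_int.const_mul _).integrableOn)
      measurableSet_Icc fun x hx => ?_
    refine mul_le_mul_of_nonneg_right ?_ (kk_nonneg _)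
    have h1 : 0 ≤ (A - x) / l := div_nonneg (by linarith [hx.2]) hl.le
    have h2 : (A - x) / l ≤ 2 * A / l := by gcongr; linarith [hx.1]
    have h3 : (A - x) / l = A / l - x / l := by ring
    have h4 := BB_mono (u := y - A / l + x / l) (v := y) (by linarith)
    have h5 : y - A / l + x / l - y = - ((A - x) / l) := by rw [h3]; ring
    rw [h5] at h4
    calc BB (y - A / l + x / l) = BB (y - A / l + x / l) * rexp (-((A - x) / l))
          * rexp ((A - x) / l) := by rw [mul_assoc, ← Real.exp_add]; simp
      _ ≤ BB y * rexp (2 * A / l) := by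
        apply mul_le_mul h4 (Real.exp_le_exp.2 h2) (Real.exp_pos _).le (BB_nonneg _)
  · refine setIntegral_mono_on (BBkk_int' l _).integrableOn ((kk_int.const_mul _).integrableOn)
      measurableSet_Icc.compl fun x hx => ?_
    exact mul_le_mul_of_nonneg_right (BB_le _) (kk_nonneg _)

lemma BB_tendsto : Tendsto BB atTop (𝓝 1) := by
  set κ := ∫ x, kk x with hκ
  have κ0 : 0 < κ := kk_integral_pos
  set C := Real.log 4 + 4 with hC
  have C0 : 0 < C := by have := Real.log_pos (x := 4) (by norm_num); linarith
  have hcov : Tendsto (fun A : ℝ => ∫ x in Icc (-A) A, kk x) atTop (𝓝 κ) :=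
    AECover.integral_tendsto_of_countably_generated
      (φ := fun A : ℝ => Icc (-A) A) (aecover_Icc tendsto_neg_atTop_atBot tendsto_id) kk_int
  rw [Metric.tendsto_atTop]
  intro η hη
  -- choose ε
  have c1 : Tendsto (fun e : ℝ => (1 + e) * Real.exp (2 * e) / (1 - e)) (𝓝[>] 0) (𝓝 1) := by
    have : ContinuousAt (fun e : ℝ => (1 + e) * Real.exp (2 * e) / (1 - e)) 0 := by
      apply ContinuousAt.div (by fun_prop) (by fun_prop) (by norm_num)
    have := this.tendsto
    simp at this
    exact this.mono_left nhdsWithin_le_nhds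
  have c2 : Tendsto (fun e : ℝ => (1 - e - C * e) * Real.exp (-(2 * e))) (𝓝[>] 0) (𝓝 1) := by
    have : ContinuousAt (fun e : ℝ => (1 - e - C * e) * Real.exp (-(2 * e))) 0 := by fun_prop
    have := this.tendsto
    simp at this
    exact this.mono_left nhdsWithin_le_nhds
  obtain ⟨e, ⟨⟨he1, he2⟩, he3⟩, he0⟩ := (((c1.eventually (gt_mem_nhds (show (1:ℝ) < 1 + η by linarith))).and
    (c2.eventually (lt_mem_nhds (show 1 - η < (1:ℝ) by linarith)))).and
    ((tendsto_id.mono_left nhdsWithin_le_nhds).eventually (gt_mem_nhds (show (0:ℝ) < 1 by norm_num)))).and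
      self_mem_nhdsWithin |>.exists
  simp only [id] at he3
  have he0 : 0 < e := he0
  obtain ⟨A, hA1, hA⟩ := ((eventually_gt_atTop (0:ℝ)).and
    (hcov.eventually (lt_mem_nhds (show κ * (1 - e) < κ by nlinarith)))).exists
  have hA2 : ∫ x in Icc (-A) A, kk x ≤ κ := setIntegral_le_integral kk_int
    (Eventually.of_forall kk_nonneg)
  set a := ∫ x in Icc (-A) A, kk x with ha
  set l := A / e with hl
  have l0 : 0 < l := div_pos hA1 he0
  have hAl : A / l = e := by rw [hl]; field_simp
  have h2Al : 2 * A / l = 2 * e := by rw [hl]; field_simp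
  have ct := conv_tendsto l0
  have t1 : ∀ᶠ y in atTop, ∫ x, BB (y + x / l) * kk x < κ * (1 + e) :=
    ct.eventually (gt_mem_nhds (by nlinarith))
  have t2 : ∀ᶠ y in atTop, κ * (1 - e) < ∫ x, BB (y + x / l) * kk x :=
    ct.eventually (lt_mem_nhds (by nlinarith))
  have t3 := (tendsto_atTop_add_const_right atTop e tendsto_id).eventually t1
  have t4 := (tendsto_atTop_add_const_right atTop (-e) tendsto_id).eventually t2
  obtain ⟨N, hN⟩ := (t3.and t4).exists_forall_of_atTop
  refine ⟨N, fun y hy => ?_⟩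
  obtain ⟨u1, u2⟩ := hN y hy
  simp only [id] at u1 u2
  have v1 := tauber_upper (A := A) l0 y
  have v2 := tauber_lower (A := A) l0 y
  rw [hAl, h2Al] at v1 v2
  rw [← sub_eq_add_neg] at u2
  have b0 := BB_nonneg y
  rw [Real.dist_eq, abs_lt]
  constructor
  · have w1 : κ * (1 - e) < BB y * rexp (2 * e) * κ + C * (κ * e) := by
      refine u2.trans_le (v2.trans ?_)
      apply add_le_add
      · exact mul_le_mul_of_nonneg_left hA2 (by positivity)
      · apply mul_le_mul_of_nonneg_left _ C0.le; linarith
    have w2 : 1 - e - C * e < BB y * rexp (2 * e) := by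
      by_contra! h
      nlinarith [mul_le_mul_of_nonneg_right h κ0.le]
    have w3 : (1 - e - C * e) * rexp (-(2 * e)) < BB y := by
      calc _ < BB y * rexp (2 * e) * rexp (-(2*e)) := by gcongr
        _ = BB y := by rw [mul_assoc, ← Real.exp_add]; simp
    linarith
  · have w1 : BB y * rexp (-(2 * e)) * (κ * (1 - e)) ≤ κ * (1 + e) := by
      refine le_trans ?_ (v1.trans u1.le)
      exact mul_le_mul_of_nonneg_left hA.le (by positivity)
    have w2 : BB y * rexp (-(2 * e)) * (1 - e) ≤ 1 + e := by
      by_contra! h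
      nlinarith [mul_lt_mul_of_pos_right h κ0]
    have w3 : BB y ≤ (1 + e) * rexp (2 * e) / (1 - e) := by
      rw [le_div_iff₀ (by linarith)]
      calc BB y * (1 - e) = BB y * rexp (-(2 * e)) * (1 - e) * rexp (2 * e) := by
            have : rexp (-(2*e)) * rexp (2*e) = 1 := by rw [← Real.exp_add]; simp
            linear_combination (-(BB y * (1 - e))) * this
        _ ≤ _ := by gcongr
    linarith

/-- prime number theorem -/
lemma psi_tendsto : Tendsto (fun x => Chebyshev.psi x / x) atTop (𝓝 1) := by
  have h := BB_tendsto.comp Real.tendsto_log_atTop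
  refine h.congr' ?_
  filter_upwards [eventually_gt_atTop 0] with x hx
  simp [BB, Real.exp_log hx, Real.exp_neg, div_eq_mul_inv]

lemma theta_tendsto : Tendsto (fun x => Chebyshev.theta x / x) atTop (𝓝 1) := by
  obtain ⟨C, hC⟩ := Chebyshev.psi_sub_theta_le_mul_sqrt
  have h1 : Tendsto (fun x : ℝ => Chebyshev.psi x / x - C / √x) atTop (𝓝 1) := by
    have := (tendsto_const_nhds (x := C)).div_atTop Real.tendsto_sqrt_atTop
    simpa using psi_tendsto.sub this
  refine tendsto_of_tendsto_of_tendsto_of_le_of_le' h1 psi_tendsto ?_ ?_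
  · filter_upwards [eventually_gt_atTop 0] with x hx
    have := hC x
    have e : C / √x = C * √x / x := by
      have := Real.mul_self_sqrt hx.le
      have : 0 < √x := Real.sqrt_pos.2 hx
      field_simp
      rw [Real.sq_sqrt hx.le]
    rw [e, ← sub_div]
    gcongr
    linarith
  · filter_upwards [eventually_gt_atTop 0] with x hx
    gcongr
    exact Chebyshev.theta_le_psi x

end PNT
end Salikhov

namespace Salikhov
section Path
open MeasureTheory Filter Topology Set

/-- the strip -/
def SS : Set ℂ := {z | 0 < z.re ∧ z.re < 1}
noncomputable def p1 (t : ℝ) : ℂ := 1 / 2 + t * (Complex.I / 10)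
noncomputable def p2 (t : ℝ) : ℂ := 1 / 2 + Complex.I / 10 + t * ((-1 + Complex.I) / 10)
noncomputable def v0 : ℂ := (2 + Complex.I) / 5

lemma p1_mem (t : ℝ) : p1 t ∈ SS := by
  unfold p1 SS; constructor <;> norm_num
lemma p2_mem {t : ℝ} (h : t ∈ Icc (0:ℝ) 1) : p2 t ∈ SS := by
  obtain ⟨h1, h2⟩ := h
  unfold p2 SS; constructor <;> norm_num <;> linarith
lemma p1_cont : Continuous p1 := by unfold p1; fun_prop
lemma p2_cont : Continuous p2 := by unfold p2; fun_prop

noncomputable def Lam (f : ℂ → ℂ) : ℂ :=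
  ∫ t in (0:ℝ)..1, (f (p1 t) * (Complex.I / 10) + f (p2 t) * ((-1 + Complex.I) / 10))

noncomputable def Phi (f : ℂ → ℂ) : ℝ := 2 * (Lam f).im

lemma lam_int {f : ℂ → ℂ} (hf : ContinuousOn f SS) : IntervalIntegrable
    (fun t => f (p1 t) * (Complex.I / 10) + f (p2 t) * ((-1 + Complex.I) / 10)) volume 0 1 := by
  apply ContinuousOn.intervalIntegrable
  rw [uIcc_of_le zero_le_one]
  apply ContinuousOn.add
  · exact (hf.comp p1_cont.continuousOn fun t _ => p1_mem t).mul_const _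
  · exact (hf.comp p2_cont.continuousOn fun t ht => p2_mem ht).mul_const _

lemma lam_add {f g : ℂ → ℂ} (hf : ContinuousOn f SS) (hg : ContinuousOn g SS) :
    Lam (fun v => f v + g v) = Lam f + Lam g := by
  unfold Lam
  rw [← intervalIntegral.integral_add (lam_int hf) (lam_int hg)]
  congr 1; ext t; ring

lemma lam_mul (c : ℂ) (f : ℂ → ℂ) : Lam (fun v => c * f v) = c * Lam f := by
  unfold Lam
  rw [← intervalIntegral.integral_const_mul]
  congr 1; ext t; ring

lemma lam_congr {f g : ℂ → ℂ} (h : ∀ z ∈ SS, f z = g z) : Lam f = Lam g := by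
  unfold Lam
  apply intervalIntegral.integral_congr
  intro t ht
  rw [uIcc_of_le zero_le_one] at ht
  simp only [h _ (p1_mem t), h _ (p2_mem ht)]

lemma lam_ftc {f F : ℂ → ℂ} (hf : ContinuousOn f SS) (h : ∀ z ∈ SS, HasDerivAt F (f z) z) :
    Lam f = F v0 - F (1 / 2) := by
  have d1 : ∀ t : ℝ, HasDerivAt p1 (Complex.I / 10) t := fun t => by
    have := (((hasDerivAt_id t).ofReal_comp).mul_const (Complex.I / 10)).const_add (1 / 2)
    exact this.congr_deriv (by simp)
  have d2 : ∀ t : ℝ, HasDerivAt p2 ((-1 + Complex.I) / 10) t := fun t => by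
    have := (((hasDerivAt_id t).ofReal_comp).mul_const ((-1 + Complex.I) / 10)).const_add
      (1 / 2 + Complex.I / 10)
    exact this.congr_deriv (by simp)
  unfold Lam
  rw [intervalIntegral.integral_eq_sub_of_hasDerivAt (f := fun t => F (p1 t) + F (p2 t)) _
    (lam_int hf)]
  · have e1 : p1 1 = p2 0 := by simp [p1, p2]
    have e2 : p2 1 = v0 := by simp [p2, v0]; ring
    have e3 : p1 0 = 1 / 2 := by simp [p1]
    rw [e1, e2, e3]; ring
  · intro t ht
    rw [uIcc_of_le zero_le_one] at ht
    exact ((h _ (p1_mem t)).comp t (d1 t)).add ((h _ (p2_mem ht)).comp t (d2 t))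

lemma ss_ne {z : ℂ} (h : z ∈ SS) : z ≠ 0 := by
  rintro rfl; simpa using h.1
lemma ss_ne1 {z : ℂ} (h : z ∈ SS) : 1 - z ≠ 0 := by
  intro e; have : z = 1 := by linear_combination -e
  rw [this] at h; simpa using h.2

lemma cont_zpow (i l : ℤ) : ContinuousOn (fun v : ℂ => v ^ i * (1 - v) ^ l) SS := by
  apply ContinuousOn.mul
  · exact ContinuousOn.zpow₀ continuousOn_id _ fun z hz => Or.inl (ss_ne hz)
  · exact ContinuousOn.zpow₀ (by fun_prop) _ fun z hz => Or.inl (ss_ne1 hz)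

/-- the basic moments -/
noncomputable def MM (i l : ℤ) : ℝ := Phi (fun v => v ^ i * (1 - v) ^ l)

lemma phi_add {f g : ℂ → ℂ} (hf : ContinuousOn f SS) (hg : ContinuousOn g SS) :
    Phi (fun v => f v + g v) = Phi f + Phi g := by
  unfold Phi; rw [lam_add hf hg, Complex.add_im]; ring

lemma phi_mul (c : ℝ) (f : ℂ → ℂ) : Phi (fun v => c * f v) = c * Phi f := by
  unfold Phi; rw [lam_mul, Complex.im_ofReal_mul]; ring

lemma MM_rec (i l : ℤ) : MM i l = MM (i + 1) l + MM i (l + 1) := by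
  unfold MM
  rw [← phi_add (cont_zpow _ _) (cont_zpow _ _)]
  unfold Phi
  congr 2
  apply lam_congr
  intro z hz
  rw [zpow_add_one₀ (ss_ne hz), zpow_add_one₀ (ss_ne1 hz)]
  ring

lemma half_real (m : ℤ) : (((1 / 2 : ℂ)) ^ m).im = 0 := by
  have : (1 / 2 : ℂ) ^ m = (((1 / 2 : ℝ) ^ m : ℝ) : ℂ) := by push_cast; rfl
  rw [this, Complex.ofReal_im]

lemma MM_v (m : ℤ) (hm : m + 1 ≠ 0) : MM m 0 * (m + 1) = 2 * (v0 ^ (m + 1)).im := by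
  have hm' : ((m : ℂ) + 1) ≠ 0 := by exact_mod_cast hm
  unfold MM Phi
  rw [lam_ftc (F := fun v => v ^ (m + 1) / ((m + 1 : ℝ) : ℂ)) (cont_zpow _ _)]
  · rw [Complex.sub_im, Complex.div_ofReal_im, Complex.div_ofReal_im, half_real]
    have : ((m : ℝ) + 1) ≠ 0 := by exact_mod_cast hm
    field_simp
    ring
  · intro z hz
    have := (hasDerivAt_zpow (m + 1) z (Or.inl (ss_ne hz))).div_const ((m + 1 : ℝ) : ℂ)
    refine this.congr_deriv ?_
    push_cast
    rw [add_sub_cancel_right, mul_div_assoc, zpow_zero]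
    field_simp

lemma MM_V (m : ℤ) (hm : m + 1 ≠ 0) : MM 0 m * (m + 1) = -2 * ((1 - v0) ^ (m + 1)).im := by
  have hm' : ((m : ℂ) + 1) ≠ 0 := by exact_mod_cast hm
  unfold MM Phi
  rw [lam_ftc (F := fun v => -((1 - v) ^ (m + 1) / ((m + 1 : ℝ) : ℂ))) (cont_zpow _ _)]
  · rw [Complex.sub_im, Complex.neg_im, Complex.neg_im, Complex.div_ofReal_im,
      Complex.div_ofReal_im, show (1 - 1 / 2 : ℂ) = 1 / 2 by norm_num, half_real]
    have : ((m : ℝ) + 1) ≠ 0 := by exact_mod_cast hm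
    field_simp
    ring
  · intro z hz
    have h1 : HasDerivAt (fun z : ℂ => 1 - z) (-1) z := by
      simpa using (hasDerivAt_id z).const_sub 1
    have := (((hasDerivAt_zpow (m + 1) (1 - z) (Or.inl (ss_ne1 hz))).comp z h1).div_const
      ((m + 1 : ℝ) : ℂ)).neg
    refine this.congr_deriv ?_
    push_cast
    rw [add_sub_cancel_right, zpow_zero]
    field_simp

lemma MM_pi : MM (-1) 0 + MM 0 (-1) = π / 2 := by
  have c1 : MM (-1) 0 + MM 0 (-1) =
      Phi (fun v => v ^ (-1 : ℤ) * (1 - v) ^ (0 : ℤ) + v ^ (0 : ℤ) * (1 - v) ^ (-1 : ℤ)) := by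
    rw [phi_add (cont_zpow _ _) (cont_zpow _ _)]; rfl
  rw [c1]
  unfold Phi
  have hc : ContinuousOn (fun v : ℂ => v ^ (-1 : ℤ) * (1 - v) ^ (0 : ℤ)
      + v ^ (0 : ℤ) * (1 - v) ^ (-1 : ℤ)) SS := (cont_zpow _ _).add (cont_zpow _ _)
  rw [lam_ftc (F := fun v => Complex.log v - Complex.log (1 - v)) hc]
  · have key : ∀ z : ℂ, 0 < z.re → (Complex.log z).im = Real.arctan (z.im / z.re) := by
      intro z hz
      have h := Complex.abs_arg_lt_pi_div_two_iff.2 (Or.inl hz)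
      rw [Complex.log_im, ← Complex.tan_arg, Real.arctan_tan (abs_lt.1 h).1 (abs_lt.1 h).2]
    rw [Complex.sub_im, Complex.sub_im, Complex.sub_im, key, key, key, key]
    · have a := Real.arctan_inv_2_add_arctan_inv_3
      have e1 : v0.im / v0.re = 2⁻¹ := by norm_num [v0]
      have e2 : (1 - v0).im / (1 - v0).re = -3⁻¹ := by norm_num [v0]
      rw [e1, e2, Real.arctan_neg]
      norm_num
      norm_num at a
      linarith
    all_goals norm_num [v0]
  · intro z hz
    have h1 : HasDerivAt (fun z : ℂ => 1 - z) (-1) z := by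
      simpa using (hasDerivAt_id z).const_sub 1
    have s1 : z ∈ Complex.slitPlane := Or.inl hz.1
    have s2 : 1 - z ∈ Complex.slitPlane := Or.inl (by simpa using hz.2)
    have := (Complex.hasDerivAt_log s1).sub (h1.clog s2)
    refine this.congr_deriv ?_
    have := ss_ne hz
    have := ss_ne1 hz
    simp
    field_simp
    ring
end Path
end Salikhov

namespace Salikhov
section Arith
open Nat (lcmUpto lcmUpto_ne_zero)

lemma gpow (c d : ℤ) (m : ℕ) : ∃ a b : ℤ, ((c : ℂ) + d * Complex.I) ^ m = a + b * Complex.I := by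
  induction m with
  | zero => exact ⟨1, 0, by simp⟩
  | succ m ih =>
    obtain ⟨a, b, h⟩ := ih
    refine ⟨a * c - b * d, a * d + b * c, ?_⟩
    rw [pow_succ, h]; push_cast
    linear_combination (b * d : ℂ) * Complex.I_sq

lemma g3pow (s : ℤ) (hs : s ^ 2 = 1) (e : ℕ) :
    ∃ a b : ℤ, ((3 : ℂ) + s * Complex.I) ^ e = 2 ^ (e / 2) * (a + b * Complex.I) := by
  have hs' : (s : ℂ) ^ 2 = 1 := by exact_mod_cast hs
  have h2 : ∀ m : ℕ, ∃ a b : ℤ, ((3 : ℂ) + s * Complex.I) ^ (2 * m) = 2 ^ m * (a + b * Complex.I) := by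
    intro m
    obtain ⟨a, b, h⟩ := gpow 4 (3 * s) m
    refine ⟨a, b, ?_⟩
    rw [← h, pow_mul, ← mul_pow]
    congr 1
    push_cast
    linear_combination (s : ℂ) ^ 2 * Complex.I_sq - hs'
  rcases Nat.even_or_odd' e with ⟨m, rfl | rfl⟩
  · obtain ⟨a, b, h⟩ := h2 m
    refine ⟨a, b, ?_⟩
    rw [h]; congr 2; omega
  · obtain ⟨a, b, h⟩ := h2 m
    refine ⟨3 * a - s * b, 3 * b + s * a, ?_⟩
    rw [pow_succ, h, show (2 * m + 1) / 2 = m by omega]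
    push_cast
    linear_combination (2 ^ m * b * s : ℂ) * Complex.I_sq

lemma im_int (a b : ℤ) : ((a : ℂ) + b * Complex.I).im = b := by simp

lemma dvd_lcmUpto {k B : ℕ} (h1 : 1 ≤ k) (h : k ≤ B) : k ∣ lcmUpto B :=
  Finset.dvd_lcm (f := id) (by simp; omega)

lemma lcmUpto_dvd {A B : ℕ} (h : A ≤ B) : lcmUpto A ∣ lcmUpto B := by
  unfold lcmUpto
  apply Finset.lcm_mono
  apply Finset.Icc_subset_Icc_right h

lemma E_plus (i : ℕ) : ∀ l B : ℕ, i + l + 1 ≤ B →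
    ∃ z : ℤ, (lcmUpto B : ℝ) * 5 ^ (i + l + 1) * MM i l = 2 ^ ((l + 1) / 2) * z := by
  induction i with
  | zero =>
    intro l B h
    obtain ⟨w, hw⟩ := dvd_lcmUpto (k := l + 1) (B := B) (by omega) (by omega)
    have h1 := MM_V l (by omega)
    obtain ⟨a, b, h2⟩ := g3pow (-1) (by norm_num) (l + 1)
    have h3 : ((1 - v0) ^ ((l : ℤ) + 1)).im * 5 ^ (l + 1) = 2 ^ ((l + 1) / 2) * b := by
      have : (1 - v0) ^ ((l : ℤ) + 1) = ((2 ^ ((l + 1) / 2) / 5 ^ (l + 1) : ℝ) : ℂ) *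
          (a + b * Complex.I) := by
        have e : (1 - v0) = (3 + (-1 : ℤ) * Complex.I) / 5 := by unfold v0; push_cast; ring
        rw [e, ← Nat.cast_succ, zpow_natCast, Nat.succ_eq_add_one, div_pow, h2]
        push_cast; ring
      rw [this, Complex.im_ofReal_mul, im_int]
      field_simp
    refine ⟨-2 * w * b, ?_⟩
    rw [hw]; push_cast
    simp only [zero_add]
    push_cast at h1
    linear_combination (w * 5 ^ (l + 1) : ℝ) * h1 - 2 * w * h3
  | succ i ih =>
    intro l B h
    obtain ⟨z1, h1⟩ := ih l B (by omega)
    obtain ⟨z2, h2⟩ := ih (l + 1) B (by omega)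
    have hr := MM_rec i l
    have : (2 : ℝ) ^ ((l + 1 + 1) / 2) =
        2 ^ ((l + 1) / 2) * 2 ^ ((l + 1 + 1) / 2 - (l + 1) / 2) := by
      rw [← pow_add]; congr 1; omega
    rw [this] at h2
    refine ⟨5 * z1 - 2 ^ ((l + 1 + 1) / 2 - (l + 1) / 2) * z2, ?_⟩
    push_cast at *
    rw [show i + 1 + l + 1 = i + l + 1 + 1 by ring, pow_succ]
    rw [show i + (l + 1) + 1 = i + l + 1 + 1 by ring, pow_succ] at h2
    linear_combination (-(lcmUpto B * 5 ^ (i + l + 1) * 5 : ℝ)) * hr + 5 * h1 - h2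

noncomputable def MP (i l : ℕ) : ℝ := MM (-i) (-l) + MM (-l) (-i)

lemma MP_symm (i l : ℕ) : MP i l = MP l i := by unfold MP; ring

lemma MP_rec (i l : ℕ) : MP (i + 1) (l + 1) = MP i (l + 1) + MP (i + 1) l := by
  unfold MP
  have h1 := MM_rec (-(i + 1 : ℕ)) (-(l + 1 : ℕ))
  have h2 := MM_rec (-(l + 1 : ℕ)) (-(i + 1 : ℕ))
  have e1 : (-((i + 1 : ℕ) : ℤ)) + 1 = - i := by push_cast; ring
  have e2 : (-((l + 1 : ℕ) : ℤ)) + 1 = - l := by push_cast; ring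
  rw [e1, e2] at h1 h2
  linarith

lemma MP_base {e j : ℕ} (he : 1 ≤ e) (h : e + 1 ≤ j) :
    ∃ z : ℤ, (lcmUpto (j - 1) : ℝ) * 2 ^ (j / 2) * MP (e + 1) 0 = z := by
  obtain ⟨w, hw⟩ := dvd_lcmUpto (k := e) (B := j - 1) (by omega) (by omega)
  obtain ⟨a, b, h2⟩ := g3pow 1 (by norm_num) e
  obtain ⟨a', b', h2'⟩ := gpow 2 (-1) e
  have h1 := MM_V (-(e + 1 : ℕ)) (by push_cast; omega)
  have h1' := MM_v (-(e + 1 : ℕ)) (by push_cast; omega)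
  have e1 : (-((e + 1 : ℕ) : ℤ)) + 1 = - (e : ℤ) := by push_cast; ring
  rw [e1, zpow_neg, zpow_natCast, ← inv_pow] at h1 h1'
  have i1 : v0⁻¹ = (2 : ℤ) + (-1 : ℤ) * Complex.I := by
    apply inv_eq_of_mul_eq_one_left; unfold v0; push_cast
    linear_combination (-1/5 : ℂ) * Complex.I_sq
  have i2 : (1 - v0)⁻¹ = (3 + (1 : ℤ) * Complex.I) / 2 := by
    apply inv_eq_of_mul_eq_one_left; unfold v0; push_cast
    linear_combination (-1/10 : ℂ) * Complex.I_sq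
  rw [i1, h2', im_int] at h1'
  have i3 : ((3 + ((1 : ℤ) : ℂ) * Complex.I) / 2) ^ e = ((2 ^ (e / 2) / 2 ^ e : ℝ) : ℂ) *
     (a + b * Complex.I) := by
    rw [div_pow, h2]; push_cast; ring
  rw [i2, i3, Complex.im_ofReal_mul, im_int] at h1
  refine ⟨w * (2 ^ (j / 2 + e / 2 + 1 - e) * b - 2 * 2 ^ (j / 2) * b') , ?_⟩
  have hk : (2 : ℝ) ^ (j / 2) * 2 ^ (e / 2) * 2 = 2 ^ e * 2 ^ (j / 2 + e / 2 + 1 - e) := by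
    rw [← pow_add, ← pow_succ, ← pow_add]; congr 1; omega
  have h3 : (e : ℝ) * MP (e + 1) 0 = -2 * b' + 2 * (2 ^ (e / 2) / 2 ^ e * b) := by
    unfold MP
    push_cast at h1 h1' ⊢
    rw [neg_zero]
    linear_combination - h1 - h1'
  have h4 : (2 : ℝ) ^ (j / 2) * (2 * (2 ^ (e / 2) / 2 ^ e)) = 2 ^ (j / 2 + e / 2 + 1 - e) := by
    field_simp
    linear_combination hk
  rw [hw]; push_cast
  linear_combination (w * 2 ^ (j / 2) : ℝ) * h3 + (w * b : ℝ) * h4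

lemma E_minus (n : ℕ) : ∀ i l j : ℕ, i + l = n → 1 ≤ n → i ≤ j → l ≤ j →
    ∃ z b : ℤ, 0 ≤ b ∧ b ≤ 2 ^ (n - 1) ∧
      (lcmUpto (j - 1) : ℝ) * 2 ^ (j / 2) * (MP i l - b * (π / 2)) = z := by
  induction n with
  | zero => intro i l j _ h; omega
  | succ n ih =>
    have base : ∀ i j : ℕ, i = n + 1 → i ≤ j → ∃ z b : ℤ, 0 ≤ b ∧ b ≤ 2 ^ n ∧
      (lcmUpto (j - 1) : ℝ) * 2 ^ (j / 2) * (MP i 0 - b * (π / 2)) = z := by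
      rintro i j rfl hj
      rcases Nat.eq_zero_or_pos n with rfl | hn
      · refine ⟨0, 1, by norm_num, by norm_num, ?_⟩
        have : MP 1 0 = π / 2 := by unfold MP; simpa using MM_pi
        simp [this]
      · obtain ⟨z, hz⟩ := MP_base hn hj
        exact ⟨z, 0, le_rfl, by positivity, by simpa using hz⟩
    intro i l j hil h1 hi hl
    rw [Nat.add_sub_cancel]
    rcases i with _ | i
    · rw [MP_symm]; exact base l j (by omega) hl
    rcases l with _ | l
    · exact base _ j (by omega) hi
    obtain ⟨z1, b1, p1, q1, r1⟩ := ih i (l + 1) j (by omega) (by omega) (by omega) hl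
    obtain ⟨z2, b2, p2, q2, r2⟩ := ih (i + 1) l j (by omega) (by omega) hi (by omega)
    refine ⟨z1 + z2, b1 + b2, by omega, ?_, ?_⟩
    · obtain ⟨m, rfl⟩ : ∃ m, n = m + 1 := ⟨n - 1, by omega⟩
      rw [pow_succ]; simp at q1 q2; linarith
    · rw [MP_rec]; push_cast
      linear_combination r1 + r2

lemma moments (k : ℤ) : ∃ (x : ℚ) (b : ℤ), MM k k = x + b * (π / 4) ∧
    (0 ≤ k → b = 0 ∧ ∀ B : ℕ, 2 * k.toNat + 1 ≤ B → ∃ z : ℤ,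
      (lcmUpto B : ℚ) * 5 ^ (2 * k.toNat + 1) * x = 2 ^ ((k.toNat + 1) / 2) * z) ∧
    (k < 0 → 0 ≤ b ∧ b ≤ 2 ^ (2 * (-k).toNat - 1) ∧ ∃ z : ℤ,
      (lcmUpto ((-k).toNat - 1) : ℚ) * 2 ^ ((-k).toNat / 2 + 1) * x = z) := by
  have lp : ∀ B, (lcmUpto B : ℚ) ≠ 0 := fun B => by exact_mod_cast lcmUpto_ne_zero B
  have lpr : ∀ B, (lcmUpto B : ℝ) ≠ 0 := fun B => by exact_mod_cast lcmUpto_ne_zero B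
  rcases le_or_gt 0 k with hk | hk
  · obtain ⟨m, rfl⟩ := Int.eq_ofNat_of_zero_le hk
    have h0 : ∀ B : ℕ, 2 * m + 1 ≤ B → ∃ z : ℤ,
      (lcmUpto B : ℝ) * 5 ^ (2 * m + 1) * MM m m = 2 ^ ((m + 1) / 2) * z := by
      intro B hB
      obtain ⟨z, h⟩ := E_plus m m B (by omega)
      refine ⟨z, ?_⟩
      rw [← h]; congr 3; ring
    obtain ⟨z, hz⟩ := h0 _ le_rfl
    refine ⟨2 ^ ((m + 1) / 2) * z / (lcmUpto (2 * m + 1) * 5 ^ (2 * m + 1)), 0, ?_, ?_, ?_⟩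
    · push_cast
      have := lpr (2 * m + 1)
      rw [← hz]; field_simp
      simp
    · intro _
      refine ⟨rfl, ?_⟩
      intro B hB
      simp only [Int.toNat_natCast] at hB ⊢
      obtain ⟨z', hz'⟩ := h0 B hB
      refine ⟨z', ?_⟩
      have e1 : MM m m = 2 ^ ((m + 1) / 2) * z / (lcmUpto (2 * m + 1) * 5 ^ (2 * m + 1)) := by
        have := lpr (2 * m + 1)
        rw [← hz]; field_simp
      rw [e1] at hz'
      exact_mod_cast hz'
    · intro h; omega
  · obtain ⟨m, hm⟩ : ∃ m : ℕ, k = -(m : ℤ) := ⟨(-k).toNat, by omega⟩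
    subst hm
    obtain ⟨z, b, h1, h2, h3⟩ := E_minus (2 * m) m m m (by ring) (by omega) le_rfl le_rfl
    have e : MP m m = 2 * MM (-m) (-m) := by unfold MP; ring
    have hx := lpr (m - 1)
    refine ⟨z / (lcmUpto (m - 1) * 2 ^ (m / 2 + 1)), b, ?_, ?_, ?_⟩
    · push_cast
      rw [← h3, e, pow_succ]; field_simp
      ring
    · intro h; omega
    · intro _
      refine ⟨h1, by simpa using h2, z, ?_⟩
      simp only [neg_neg, Int.toNat_natCast]
      have := lp (m - 1)
      field_simp

end Arith
end Salikhov

namespace Salikhov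
section Func
open Nat (lcmUpto lcmUpto_ne_zero)
open Polynomial

noncomputable def xk (k : ℤ) : ℚ := (moments k).choose
noncomputable def bk (k : ℤ) : ℤ := (moments k).choose_spec.choose
lemma xk_spec (k : ℤ) : MM k k = xk k + bk k * (π / 4) ∧
    (0 ≤ k → bk k = 0 ∧ ∀ B : ℕ, 2 * k.toNat + 1 ≤ B → ∃ z : ℤ,
      (lcmUpto B : ℚ) * 5 ^ (2 * k.toNat + 1) * xk k = 2 ^ ((k.toNat + 1) / 2) * z) ∧
    (k < 0 → 0 ≤ bk k ∧ bk k ≤ 2 ^ (2 * (-k).toNat - 1) ∧ ∃ z : ℤ,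
      (lcmUpto ((-k).toNat - 1) : ℚ) * 2 ^ ((-k).toNat / 2 + 1) * xk k = z) :=
  (moments k).choose_spec.choose_spec

noncomputable def XX (m : ℤ) : ℚ[X] →ₗ[ℚ] ℚ :=
  Polynomial.lsum fun k => (LinearMap.mulRight ℚ (xk (k - m)))
noncomputable def YY (m : ℤ) : ℚ[X] →ₗ[ℚ] ℚ :=
  Polynomial.lsum fun k => (LinearMap.mulRight ℚ ((bk (k - m) : ℤ) : ℚ))
noncomputable def pf (m : ℤ) (U : ℚ[X]) (v : ℂ) : ℂ := aeval (v * (1 - v)) U * (v * (1 - v)) ^ (-m)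
noncomputable def PP (m : ℤ) (U : ℚ[X]) : ℝ := Phi (pf m U)

lemma XX_eq (m : ℤ) (U : ℚ[X]) {D : ℕ} (h : U.natDegree ≤ D) :
    XX m U = ∑ k ∈ Finset.range (D + 1), U.coeff k * xk (k - m) := by
  unfold XX
  rw [Polynomial.lsum_apply, Polynomial.sum_over_range' (n := D + 1)]
  · rfl
  · intro k; simp
  · omega
lemma YY_eq (m : ℤ) (U : ℚ[X]) {D : ℕ} (h : U.natDegree ≤ D) :
    YY m U = ∑ k ∈ Finset.range (D + 1), U.coeff k * bk (k - m) := by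
  unfold YY
  rw [Polynomial.lsum_apply, Polynomial.sum_over_range' (n := D + 1)]
  · rfl
  · intro k; simp
  · omega

lemma XX_monomial (m : ℤ) (k : ℕ) (a : ℚ) : XX m (monomial k a) = a * xk (k - m) := by
  unfold XX
  rw [Polynomial.lsum_apply, Polynomial.sum_monomial_index]
  · rfl
  · simp
lemma YY_monomial (m : ℤ) (k : ℕ) (a : ℚ) : YY m (monomial k a) = a * bk (k - m) := by
  unfold YY
  rw [Polynomial.lsum_apply, Polynomial.sum_monomial_index]
  · rfl
  · simp

lemma ss_ney {z : ℂ} (h : z ∈ SS) : z * (1 - z) ≠ 0 := mul_ne_zero (ss_ne h) (ss_ne1 h)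

lemma pf_cont (m : ℤ) (U : ℚ[X]) : ContinuousOn (pf m U) SS := by
  unfold pf
  apply ContinuousOn.mul
  · apply Continuous.continuousOn
    have := (Polynomial.continuous_aeval U (A := ℂ))
    exact this.comp (by fun_prop)
  · exact ContinuousOn.zpow₀ (by fun_prop) _ fun z hz => Or.inl (ss_ney hz)

lemma PP_eq (m : ℤ) (U : ℚ[X]) : PP m U = XX m U + YY m U * (π / 4) := by
  induction U using Polynomial.induction_on' with
  | add p q hp hq =>
    rw [map_add, map_add]
    have : PP m (p + q) = PP m p + PP m q := by
      unfold PP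
      rw [← phi_add (pf_cont m p) (pf_cont m q)]
      congr 1; ext v; unfold pf; rw [map_add]; ring
    rw [this, hp, hq]; push_cast; ring
  | monomial k a =>
    rw [XX_monomial, YY_monomial]
    have h := (xk_spec (k - m)).1
    have : PP m (monomial k a) = a * MM (k - m) (k - m) := by
      unfold PP MM
      rw [← phi_mul]
      unfold Phi
      congr 2
      apply lam_congr
      intro z hz
      have hy := ss_ney hz
      unfold pf
      rw [aeval_monomial, ← mul_zpow, show (k : ℤ) - m = k + -m from sub_eq_add_neg _ _,
        zpow_add₀ hy, zpow_natCast]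
      simp
      ring
    rw [this, h]
    push_cast; ring

lemma pi_lin {x y : ℚ} (h : (x : ℝ) + y * (π / 4) = 0) : x = 0 ∧ y = 0 := by
  have hy : y = 0 := by
    by_contra hy
    have hy' : (y : ℝ) ≠ 0 := by exact_mod_cast hy
    apply irrational_pi
    refine ⟨-4 * x / y, ?_⟩
    push_cast
    field_simp
    linarith
  subst hy
  simp at h
  exact ⟨by exact_mod_cast h, rfl⟩

lemma PP_zero {m : ℤ} {U : ℚ[X]} (h : PP m U = 0) : XX m U = 0 ∧ YY m U = 0 := by
  rw [PP_eq] at h; exact pi_lin h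

noncomputable def uP : ℤ[X] := 1 - 4 * X
noncomputable def qP : ℤ[X] := 25 * X ^ 2 - 14 * X + 2
noncomputable abbrev toQ (U : ℤ[X]) : ℚ[X] := U.map (Int.castRingHom ℚ)

lemma aeval_toQ (z : ℂ) (U : ℤ[X]) : aeval z (toQ U) = aeval z U := by
  rw [toQ, aeval_def, eval₂_map, aeval_def]; congr 1

lemma q_v0 : aeval (v0 * (1 - v0)) qP = 0 := by
  simp [qP, v0, map_ofNat]
  have := Complex.I_sq
  ring_nf
  have h3 : Complex.I ^ 3 = -Complex.I := by rw [pow_succ, this]; ring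
  have h4 : Complex.I ^ 4 = 1 := Complex.I_pow_four
  rw [h4, h3, this]; ring

lemma exact1 (m : ℤ) (h : ℤ[X]) (hq : qP ∣ h) :
    PP (m + 1) (toQ (-2 * X * h + uP * (derivative h * X - C m * h))) = 0 := by
  unfold PP Phi
  rw [lam_ftc (F := fun v => (1 - 2 * v) * (aeval (v * (1 - v)) h * (v * (1 - v)) ^ (-m)))
    (pf_cont _ _)]
  · obtain ⟨k, rfl⟩ := hq
    rw [map_mul, q_v0]
    norm_num
  · intro z hz
    have d1 : HasDerivAt (fun v : ℂ => 1 - 2 * v) (-2) z := by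
      simpa using ((hasDerivAt_id z).const_mul 2).const_sub 1
    have dy : HasDerivAt (fun v : ℂ => v * (1 - v)) (1 - 2 * z) z := by
      have := (hasDerivAt_id z).mul ((hasDerivAt_id z).const_sub 1)
      refine this.congr_deriv ?_
      simp; ring
    have d2 : HasDerivAt (fun v : ℂ => aeval (v * (1 - v)) h)
        (aeval (z * (1 - z)) (derivative h) * (1 - 2 * z)) z :=
      HasDerivAt.comp (h₂ := fun y : ℂ => aeval y h) z
        (by simpa [aeval_toQ, derivative_map, toQ] using Polynomial.hasDerivAt_aeval (toQ h) (z * (1 - z))) dy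
    have hy := ss_ney hz
    have d3 : HasDerivAt (fun v : ℂ => (v * (1 - v)) ^ (-m)) _ z :=
      HasDerivAt.comp (h₂ := fun y : ℂ => y ^ (-m)) z
        (hasDerivAt_zpow (-m) (z * (1 - z)) (Or.inl hy)) dy
    have := d1.mul (d2.mul d3)
    refine this.congr_deriv ?_
    unfold pf
    rw [aeval_toQ]
    have e1 : (z * (1 - z)) ^ (-m) = (z * (1 - z)) ^ (-(m + 1)) * (z * (1 - z)) := by
      rw [← zpow_add_one₀ hy]; congr 1; ring
    simp only [map_add, map_mul, map_sub, map_neg, uP, aeval_X, aeval_C, Pi.mul_apply, map_ofNat,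
      map_one]
    rw [show -m - 1 = -(m + 1) by ring, e1]
    generalize (z * (1 - z)) ^ (-(m + 1)) = w
    simp
    ring

end Func
end Salikhov

namespace Salikhov
section Integ
open Nat (lcmUpto lcmUpto_ne_zero)
open Polynomial

lemma coeff_mul_dvd {U V : ℤ[X]} {F G H : ℕ → ℤ} (hU : ∀ i, F i ∣ U.coeff i)
    (hV : ∀ i, G i ∣ V.coeff i) (h : ∀ i l, H (i + l) ∣ F i * G l) (k : ℕ) :
    H k ∣ (U * V).coeff k := by
  rw [coeff_mul]
  apply Finset.dvd_sum
  intro x hx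
  rw [Finset.HasAntidiagonal.mem_antidiagonal] at hx
  rw [← hx]
  exact (h _ _).trans (mul_dvd_mul (hU _) (hV _))

lemma wt2_u (b k : ℕ) : (2 : ℤ) ^ ((0 - k + 1) / 2) ∣ (uP ^ b).coeff k := by
  have : (0 - k + 1) / 2 = 0 := by omega
  rw [this]; simp

lemma wt2_q (a : ℕ) : ∀ k, (2 : ℤ) ^ ((2 * a - k + 1) / 2) ∣ (qP ^ a).coeff k := by
  induction a with
  | zero => intro k; have : (2 * 0 - k + 1) / 2 = 0 := by omega
            rw [this]; simp
  | succ a ih =>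
    intro k
    rw [pow_succ]
    refine coeff_mul_dvd (H := fun k => (2 : ℤ) ^ ((2 * (a + 1) - k + 1) / 2)) ih (G := fun k => (2 : ℤ) ^ ((2 - k + 1) / 2)) ?_ ?_ k
    · intro i
      rcases i with _ | _ | i
      · simp [qP, coeff_X, coeff_ofNat_mul]
      · simp [qP, coeff_X, coeff_ofNat_mul, coeff_X_pow]
      · have : (2 - (i + 1 + 1) + 1) / 2 = 0 := by omega
        simp only [this]; simp
    · intro i l
      rw [← pow_add]
      apply pow_dvd_pow
      omega

lemma wt5_u (b : ℕ) : ∀ k, (25 : ℤ) ^ (k - b) ∣ (uP ^ b).coeff k := by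
  induction b with
  | zero =>
    intro k; rcases k with _ | k
    · simp
    · simp [coeff_one]
  | succ a ih =>
    intro k
    rw [pow_succ]
    refine coeff_mul_dvd (H := fun k => (25 : ℤ) ^ (k - (a + 1))) ih (G := fun k => (25 : ℤ) ^ (k - 1)) ?_ ?_ k
    · intro i
      rcases i with _ | _ | i
      · simp [uP]
      · simp [uP, coeff_X, coeff_ofNat_mul]
      · simp [uP, coeff_X, coeff_ofNat_mul, coeff_one]
    · intro i l
      rw [← pow_add]
      apply pow_dvd_pow
      omega

lemma wt5_q (b : ℕ) : ∀ k, (25 : ℤ) ^ (k - b) ∣ (qP ^ b).coeff k := by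
  induction b with
  | zero =>
    intro k; rcases k with _ | k
    · simp
    · simp [coeff_one]
  | succ a ih =>
    intro k
    rw [pow_succ]
    refine coeff_mul_dvd (H := fun k => (25 : ℤ) ^ (k - (a + 1))) ih (G := fun k => (25 : ℤ) ^ (k - 1)) ?_ ?_ k
    · intro i
      rcases i with _ | _ | _ | i
      · simp [qP]
      · simp [qP]
      · simp [qP, coeff_X, coeff_ofNat_mul, coeff_X_pow]
      · simp [qP, coeff_X, coeff_ofNat_mul, coeff_X_pow]
    · intro i l
      rw [← pow_add]
      apply pow_dvd_pow
      omega

noncomputable def RP (a b : ℕ) : ℤ[X] := uP ^ b * qP ^ a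

lemma RP_wt2 (a b k : ℕ) : (2 : ℤ) ^ ((2 * a - k + 1) / 2) ∣ (RP a b).coeff k := by
  refine coeff_mul_dvd (H := fun k => (2 : ℤ) ^ ((2 * a - k + 1) / 2)) (wt2_u b) (wt2_q a) ?_ k
  intro i l
  rw [← pow_add]
  apply pow_dvd_pow
  omega

lemma RP_wt5 (a b k : ℕ) : (25 : ℤ) ^ (k - (a + b)) ∣ (RP a b).coeff k := by
  refine coeff_mul_dvd (H := fun k => (25 : ℤ) ^ (k - (a + b))) (wt5_u b) (wt5_q a) ?_ k
  intro i l
  rw [← pow_add]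
  apply pow_dvd_pow
  omega

lemma uP_deg : uP.natDegree ≤ 1 := by unfold uP; compute_degree
lemma qP_deg : qP.natDegree ≤ 2 := by unfold qP; compute_degree
lemma RP_deg (a b : ℕ) : (RP a b).natDegree ≤ b + 2 * a := by
  unfold RP
  refine natDegree_mul_le.trans (add_le_add ?_ ?_)
  · exact (natDegree_pow_le.trans (Nat.mul_le_mul_left _ uP_deg)).trans (by simp)
  · exact (natDegree_pow_le.trans (Nat.mul_le_mul_left _ qP_deg)).trans (by omega)

lemma toQ_deg {U : ℤ[X]} {D : ℕ} (h : U.natDegree ≤ D) : (toQ U).natDegree ≤ D :=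
  natDegree_map_le.trans h

lemma sum_int {s : Finset ℕ} {c d : ℚ} {f : ℕ → ℚ} (h : ∀ k ∈ s, ∃ z : ℤ, c * f k = d * z) :
    ∃ z : ℤ, c * ∑ k ∈ s, f k = d * z := by
  choose! z hz using h
  refine ⟨∑ k ∈ s, z k, ?_⟩
  rw [Finset.mul_sum]; push_cast; rw [Finset.mul_sum]
  exact Finset.sum_congr rfl hz

lemma X_int (N j : ℕ) (hj : j ≤ 2) : ∃ z : ℤ,
    1250 * (lcmUpto (8 * N + 3) : ℚ) * XX ((6 * N : ℕ) + 1) (toQ (RP (4 * N) (2 * N + j)))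
      = 2 ^ N * z := by
  rw [XX_eq _ _ (toQ_deg (RP_deg _ _))]
  apply sum_int
  intro k hk
  rw [Finset.mem_range] at hk
  obtain ⟨n2, h2⟩ := RP_wt2 (4 * N) (2 * N + j) k
  rw [toQ, coeff_map, eq_intCast]
  set n := (RP (4 * N) (2 * N + j)).coeff k
  obtain ⟨-, hp, hm⟩ := xk_spec ((k : ℤ) - ((6 * N : ℕ) + 1))
  rcases le_or_gt 0 ((k : ℤ) - ((6 * N : ℕ) + 1)) with hs | hs
  · obtain ⟨-, h⟩ := hp hs
    obtain ⟨e, he⟩ : ∃ e : ℕ, k = e + (6 * N + 1) := ⟨k - (6 * N + 1), by omega⟩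
    have e1 : (k : ℤ) - ((6 * N : ℕ) + 1) = e := by rw [he]; push_cast; ring
    rw [e1] at h ⊢
    simp only [Int.toNat_natCast] at h
    obtain ⟨z, hz⟩ := h (8 * N + 3) (by omega)
    have co : IsCoprime ((2 : ℤ) ^ ((2 * (4 * N) - k + 1) / 2)) (25 ^ (k - (4 * N + (2 * N + j)))) := by
      apply IsCoprime.pow
      rw [Int.isCoprime_iff_gcd_eq_one]; rfl
    obtain ⟨w, hw⟩ := co.mul_dvd ⟨n2, h2⟩ (RP_wt5 (4 * N) (2 * N + j) k)
    have hw' : n = 2 ^ ((2 * (4 * N) - k + 1) / 2) * 25 ^ (k - (4 * N + (2 * N + j))) * w := hw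
    have p2 : (2 : ℚ) ^ ((2 * (4 * N) - k + 1) / 2) * 2 ^ ((e + 1) / 2) = 2 ^ N *
        2 ^ ((2 * (4 * N) - k + 1) / 2 + (e + 1) / 2 - N) := by
      rw [← pow_add, ← pow_add]; congr 1; omega
    have p5 : (625 : ℚ) * 25 ^ (k - (4 * N + (2 * N + j))) = 5 ^ (2 * e + 1) *
        5 ^ (2 * (k - (4 * N + (2 * N + j))) + 4 - (2 * e + 1)) := by
      rw [← pow_add, show (625 : ℚ) = 5 ^ 4 by norm_num, show (25 : ℚ) = 5 ^ 2 by norm_num,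
        ← pow_mul, ← pow_add]; congr 1; omega
    rw [hw']
    clear_value n
    clear hw hw' co h2 h hp hm
    generalize 2 * (k - (4 * N + (2 * N + j))) + 4 - (2 * e + 1) = f5 at *
    generalize (2 * (4 * N) - k + 1) / 2 + (e + 1) / 2 - N = f2 at *
    generalize k - (4 * N + (2 * N + j)) = f25 at *
    generalize (2 * (4 * N) - k + 1) / 2 = g2 at *
    generalize (e + 1) / 2 = i2 at *
    refine ⟨2 * 2 ^ f2 * 5 ^ f5 * w * z, ?_⟩
    push_cast
    linear_combination 2 * (lcmUpto (8 * N + 3) : ℚ) * xk e * 2 ^ g2 * w * p5 +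
      2 * 2 ^ g2 * w * 5 ^ f5 * hz + 2 * 5 ^ f5 * w * z * p2
  · obtain ⟨-, -, z, h⟩ := hm hs
    obtain ⟨e, he⟩ : ∃ e : ℕ, k + e = (6 * N + 1) := ⟨(6 * N + 1) - k, by omega⟩
    have e1 : (k : ℤ) - ((6 * N : ℕ) + 1) = -e := by push_cast; omega
    rw [e1] at h ⊢
    simp only [Int.toNat_natCast, neg_neg] at h
    obtain ⟨w, hw⟩ := lcmUpto_dvd (A := e - 1) (B := 8 * N + 3) (by omega)
    have p2 : (2 : ℚ) ^ ((2 * (4 * N) - k + 1) / 2) * 2 = 2 ^ N * 2 ^ (e / 2 + 1) := by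
      rw [← pow_add, ← pow_succ]; congr 1; omega
    refine ⟨625 * w * n2 * z, ?_⟩
    rw [hw, h2]
    push_cast
    generalize (2 : ℚ) ^ ((2 * (4 * N) - k + 1) / 2) = b2 at *
    generalize (2 : ℚ) ^ (e / 2 + 1) = c2 at *
    linear_combination 625 * (lcmUpto (e - 1) : ℚ) * w * n2 * xk (-e) * p2 + 625 * 2 ^ N * w * n2 * h

lemma Y_int (N j : ℕ) : ∃ z : ℤ,
    YY ((6 * N : ℕ) + 1) (toQ (RP (4 * N) (2 * N + j))) = 2 ^ N * z := by
  rw [YY_eq _ _ (toQ_deg (RP_deg _ _)), ← one_mul (∑ k ∈ _, _)]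
  apply sum_int
  intro k hk
  obtain ⟨n2, h2⟩ := RP_wt2 (4 * N) (2 * N + j) k
  rw [toQ, coeff_map, eq_intCast]
  obtain ⟨-, hp, hm⟩ := xk_spec ((k : ℤ) - ((6 * N : ℕ) + 1))
  rcases le_or_gt 0 ((k : ℤ) - ((6 * N : ℕ) + 1)) with hs | hs
  · obtain ⟨h, -⟩ := hp hs
    exact ⟨0, by rw [h]; simp⟩
  · have p2 : (2 : ℤ) ^ ((2 * (4 * N) - k + 1) / 2) =
       2 ^ N * 2 ^ ((2 * (4 * N) - k + 1) / 2 - N) := by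
      rw [← pow_add]; congr 1; omega
    rw [h2, p2]
    refine ⟨2 ^ ((2 * (4 * N) - k + 1) / 2 - N) * n2 * bk ((k : ℤ) - ((6 * N : ℕ) + 1)), ?_⟩
    push_cast; ring

/-- majorant -/
def Maj (U S : ℤ[X]) : Prop := ∀ k, |U.coeff k| ≤ S.coeff k

lemma Maj.mul {U S V T : ℤ[X]} (h : Maj U S) (h' : Maj V T) : Maj (U * V) (S * T) := by
  intro k
  rw [coeff_mul, coeff_mul]
  refine (Finset.abs_sum_le_sum_abs _ _).trans (Finset.sum_le_sum fun x _ => ?_)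
  rw [abs_mul]
  exact mul_le_mul (h _) (h' _) (abs_nonneg _) ((abs_nonneg _).trans (h _))

lemma Maj.pow {U S : ℤ[X]} (h : Maj U S) (n : ℕ) : Maj (U ^ n) (S ^ n) := by
  induction n with
  | zero => intro k; simp [coeff_one]; split_ifs <;> simp
  | succ n ih => rw [pow_succ, pow_succ]; exact ih.mul h

noncomputable def uS : ℤ[X] := 1 + 4 * X
noncomputable def qS : ℤ[X] := 25 * X ^ 2 + 14 * X + 2

lemma maj_u : Maj uP uS := by
  intro k
  rcases k with _ | _ | k <;> simp [uP, uS, coeff_X, coeff_ofNat_mul, coeff_one]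
lemma maj_q : Maj qP qS := by
  intro k
  rcases k with _ | _ | _ | k <;> simp [qP, qS, coeff_X, coeff_ofNat_mul, coeff_X_pow]

lemma maj_R (a b : ℕ) : Maj (RP a b) (uS ^ b * qS ^ a) := (maj_u.pow b).mul (maj_q.pow a)

lemma Y_le (N j : ℕ) (hj : j ≤ 2) :
    |YY ((6 * N : ℕ) + 1) (toQ (RP (4 * N) (2 * N + j)))| ≤ 8 * (4 ^ 7 * (113 / 16) ^ 4) ^ N := by
  set S := uS ^ (2 * N + j) * qS ^ (4 * N) with hS
  set D := max ((2 * N + j) + 2 * (4 * N)) S.natDegree with hD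
  have e1 : (8 : ℚ) * (4 ^ 7 * (113 / 16) ^ 4) ^ N ≥ 2 * 4 ^ (6 * N) * aeval (1 / 4 : ℚ) S := by
    have : aeval (1 / 4 : ℚ) S = 2 ^ (2 * N + j) * (113 / 16) ^ (4 * N) := by
      simp [hS, uS, qS, map_ofNat]; norm_num
    rw [this, mul_pow, pow_add, ← pow_mul, ← pow_mul, pow_mul 2 2 N]
    have h2 : (2 : ℚ) ^ j ≤ 2 ^ 2 := pow_le_pow_right₀ (by norm_num) hj
    have : (4 : ℚ) ^ (7 * N) = 4 ^ (6 * N) * 4 ^ N := by rw [← pow_add]; congr 1; ring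
    rw [this]
    norm_num
    have h3 : (0 : ℚ) ≤ 2 * 4 ^ (6 * N) * 4 ^ N * (113 / 16) ^ (4 * N) := by positivity
    nlinarith
  refine le_trans ?_ e1
  rw [YY_eq _ _ (toQ_deg ((RP_deg _ _).trans (le_max_left _ _) : _ ≤ D)),
    aeval_eq_sum_range' (n := D + 1) (Nat.lt_succ_of_le (le_max_right _ _))]
  refine (Finset.abs_sum_le_sum_abs _ _).trans ?_
  rw [Finset.mul_sum]
  apply Finset.sum_le_sum
  intro k hk
  rw [toQ, coeff_map, eq_intCast, abs_mul]
  have hmaj : |((RP (4 * N) (2 * N + j)).coeff k : ℚ)| ≤ S.coeff k := by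
    exact_mod_cast maj_R (4 * N) (2 * N + j) k
  obtain ⟨-, hp, hm⟩ := xk_spec ((k : ℤ) - ((6 * N : ℕ) + 1))
  have hb : |((bk ((k : ℤ) - ((6 * N : ℕ) + 1)) : ℤ) : ℚ)| ≤ 2 * 4 ^ (6 * N) * (1 / 4) ^ k := by
    rcases le_or_gt 0 ((k : ℤ) - ((6 * N : ℕ) + 1)) with hs | hs
    · rw [(hp hs).1]; simp
    · obtain ⟨b0, b1, -⟩ := hm hs
      rw [abs_of_nonneg (by exact_mod_cast b0)]
      have b1' : ((bk ((k : ℤ) - ((6 * N : ℕ) + 1)) : ℤ) : ℚ) ≤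
        2 ^ (2 * (-((k : ℤ) - ((6 * N : ℕ) + 1))).toNat - 1) := by exact_mod_cast b1
      refine b1'.trans ?_
      obtain ⟨e, he⟩ : ∃ e : ℕ, k + e = (6 * N) := ⟨(6 * N) - k, by omega⟩
      have : 2 * (-((k : ℤ) - ((6 * N : ℕ) + 1))).toNat - 1 = 2 * e + 1 := by omega
      rw [this, ← he, pow_add 4 k e, pow_succ, pow_mul]
      have : (4 : ℚ) ^ k * (1 / 4) ^ k = 1 := by rw [← mul_pow]; norm_num
      have h5 : ((2 : ℚ) ^ 2) ^ e = 4 ^ e := by norm_num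
      rw [h5]
      exact le_of_eq (by linear_combination (-2) * (4 : ℚ) ^ e * this)
  have hS0 : (0 : ℚ) ≤ S.coeff k := (abs_nonneg _).trans hmaj
  calc _ ≤ (S.coeff k : ℚ) * (2 * 4 ^ (6 * N) * (1 / 4) ^ k) :=
        mul_le_mul hmaj hb (abs_nonneg _) hS0
    _ = _ := by simp; ring

lemma E_int {U : ℤ[X]} {D B m : ℕ} (hU : U.natDegree ≤ D) (h1 : 2 * D + 1 ≤ B) (h2 : m ≤ B) :
    ∃ z : ℤ, (10 : ℚ) ^ (B + 1) * lcmUpto B * XX m (toQ U) = z := by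
  rw [XX_eq _ _ (toQ_deg hU)]
  suffices h : ∃ z : ℤ, (10 : ℚ) ^ (B + 1) * lcmUpto B *
      ∑ k ∈ Finset.range (D + 1), (toQ U).coeff k * xk (k - m) = 1 * z by simpa using h
  apply sum_int
  intro k hk
  rw [Finset.mem_range] at hk
  rw [toQ, coeff_map, eq_intCast]
  obtain ⟨-, hp, hm⟩ := xk_spec ((k : ℤ) - m)
  have h10 : (10 : ℚ) ^ (B + 1) = 2 ^ (B + 1) * 5 ^ (B + 1) := by rw [← mul_pow]; norm_num
  rcases le_or_gt 0 ((k : ℤ) - m) with hs | hs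
  · obtain ⟨-, h⟩ := hp hs
    obtain ⟨z, hz⟩ := h B (by omega)
    generalize hE : ((k : ℤ) - m).toNat = e at *
    have p5 : (5 : ℚ) ^ (B + 1) = 5 ^ (2 * e + 1) * 5 ^ (B + 1 - (2 * e + 1)) := by
      rw [← pow_add]; congr 1; omega
    generalize B + 1 - (2 * e + 1) = f at *
    refine ⟨2 ^ (B + 1) * 5 ^ f * U.coeff k * 2 ^ ((e + 1) / 2) * z, ?_⟩
    rw [h10, p5]; push_cast
    linear_combination 2 ^ (B + 1) * 5 ^ f * (U.coeff k : ℚ) * hz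
  · obtain ⟨-, -, z, hz⟩ := hm hs
    generalize hE : (-((k : ℤ) - m)).toNat = e at *
    obtain ⟨w, hw⟩ := lcmUpto_dvd (A := e - 1) (B := B) (by omega)
    have p2 : (2 : ℚ) ^ (B + 1) = 2 ^ (e / 2 + 1) * 2 ^ (B + 1 - (e / 2 + 1)) := by
      rw [← pow_add]; congr 1; omega
    generalize B + 1 - (e / 2 + 1) = f at *
    refine ⟨5 ^ (B + 1) * 2 ^ f * U.coeff k * w * z, ?_⟩
    rw [h10, p2, hw]; push_cast
    linear_combination 5 ^ (B + 1) * 2 ^ f * (U.coeff k : ℚ) * w * hz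

end Integ
end Salikhov

namespace Salikhov
section Cancel
open Nat (lcmUpto lcmUpto_ne_zero)
open Polynomial

lemma anti (P : ℤ[X]) (p : ℕ) (h : P.natDegree + 1 < p) : ∃ W : ℤ[X],
    derivative W = ((p - 1).factorial : ℤ[X]) * P ∧ W.natDegree ≤ p := by
  refine ⟨∑ k ∈ Finset.range (P.natDegree + 1),
    monomial (k + 1) (P.coeff k * ((p - 1).factorial / (k + 1) : ℕ)), ?_, ?_⟩
  · rw [derivative_sum]
    conv_rhs => rw [P.as_sum_range' (P.natDegree + 1) (by omega), Finset.mul_sum]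
    apply Finset.sum_congr rfl
    intro k hk
    rw [Finset.mem_range] at hk
    rw [derivative_monomial, ← C_eq_natCast, C_mul_monomial]
    congr 1
    have : (p - 1).factorial / (k + 1) * (k + 1) = (p - 1).factorial :=
      Nat.div_mul_cancel (Nat.dvd_factorial (by omega) (by omega))
    have t : (((p - 1).factorial / (k + 1) : ℕ) : ℤ) * ((k + 1 : ℕ) : ℤ) = ((p - 1).factorial : ℕ) := by
      exact_mod_cast this
    rw [mul_assoc, t, mul_comm]
  · apply natDegree_sum_le_of_forall_le
    intro k hk
    rw [Finset.mem_range] at hk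
    exact (natDegree_monomial_le _).trans (by omega)

lemma XX_shift (m : ℤ) (k : ℕ) (U : ℚ[X]) : XX (m + k) (X ^ k * U) = XX m U := by
  induction U using Polynomial.induction_on' with
  | add p q hp hq => rw [mul_add, map_add, map_add, hp, hq]
  | monomial n a =>
    rw [X_pow_mul_monomial, XX_monomial, XX_monomial]
    congr 2; push_cast; ring

lemma uP_der : derivative uP = -4 := by simp [uP]
lemma uP_pow_der (s : ℕ) : uP * derivative (uP ^ s) = -4 * (s : ℤ[X]) * uP ^ s := by
  rcases s with _ | s
  · simp
  · rw [derivative_pow, uP_der]; simp; ring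

lemma exact2 (s h : ℕ) (g p : ℕ) (hs : g * p = 2 * s + 1) (b' a' c' : ℕ) (W : ℤ[X]) (F : ℤ[X])
    (hW : derivative W = F * (uP ^ b' * qP ^ a' * X ^ c')) :
    PP (((h * p : ℕ) : ℤ) + 1) (toQ ((p : ℤ[X]) * (uP ^ s * qP ^ (2 * s) * W *
      (- 2 * (g : ℤ[X]) * X * qP + (g : ℤ[X]) * X * uP * derivative qP - (h : ℤ[X]) * uP * qP)) +
      F * (X ^ (c' + 1) * RP (a' + (2 * s + 1)) (b' + s + 1)))) = 0 := by
  have := exact1 (h * p : ℕ) (uP ^ s * qP ^ (2 * s + 1) * W)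
    ((dvd_pow_self qP (by omega)).trans ((Dvd.intro_left _ rfl).trans (Dvd.intro _ rfl)))
  convert this using 3
  rw [derivative_mul, derivative_mul, hW, derivative_pow qP]
  have e1 := uP_pow_der s
  have e2 : (g : ℤ[X]) * p = 2 * s + 1 := by exact_mod_cast congrArg (Nat.cast (R := ℤ[X])) hs
  simp only [add_tsub_cancel_right, RP]
  have e3 : (C ((2 * s + 1 : ℕ) : ℤ) : ℤ[X]) = 2 * s + 1 := by simp
  have e4 : (C (((h * p : ℕ) : ℤ)) : ℤ[X]) = h * p := by simp
  have e5 : (C ((2 * s + 1 : ℕ) : ℤ[X])) = C (C ((2 * s + 1 : ℕ) : ℤ)) := by simp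
  rw [e4]
  try rw [e3]
  linear_combination (uP ^ s * qP ^ (2 * s) * W * (- 2 * X * qP + X * uP * derivative qP)) * e2
    - X * qP ^ (2 * s + 1) * W * e1

lemma cancel {N j p k r : ℕ} (hj : j ≤ 2) (hp : p.Prime) (hk : k ≤ 2) (hr : 2 * N = k * p + r)
    (h1 : p ≤ 2 * r) (h2 : 3 * r < 2 * p) (h40 : 40 < p) {Z : ℤ}
    (hZ : 1250 * (lcmUpto (8 * N + 3) : ℚ) * XX ((6 * N : ℕ) + 1) (toQ (RP (4 * N) (2 * N + j)))
      = 2 ^ N * Z) : (p : ℤ) ∣ Z := by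
  have hodd : p % 2 = 1 := (hp.eq_two_or_odd).resolve_left (by omega)
  obtain ⟨s, hs⟩ : ∃ s, (2 * k + 1) * p = 2 * s + 1 := by
    have : ((2 * k + 1) * p) % 2 = 1 := by rw [Nat.mul_mod, hodd]; omega
    exact ⟨((2 * k + 1) * p) / 2, by omega⟩
  have hkp : 2 * (k * p) + p = 2 * s + 1 := by rw [← hs]; ring
  obtain ⟨b', hb'⟩ : ∃ b', 2 * N + j = b' + s + 1 := ⟨2 * N + j - s - 1, by omega⟩
  obtain ⟨a', ha'⟩ : ∃ a', 4 * N = a' + (2 * s + 1) := ⟨4 * N - (2 * s + 1), by omega⟩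
  have hhp : (3 * k + 2) * p = 3 * (k * p) + 2 * p := by ring
  obtain ⟨c', hc'⟩ : ∃ c', (3 * k + 2) * p = 6 * N + (c' + 1) := ⟨(3 * k + 2) * p - 6 * N - 1, by omega⟩
  have hPd : (uP ^ b' * qP ^ a' * X ^ c').natDegree ≤ b' + 2 * a' + c' := by
    refine natDegree_mul_le.trans (add_le_add (RP_deg a' b') (natDegree_X_pow_le _))
  obtain ⟨W, hW, hWd⟩ := anti (uP ^ b' * qP ^ a' * X ^ c') p (by omega)
  have hE := exact2 s (3 * k + 2) (2 * k + 1) p hs b' a' c' W _ hW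
  rw [← ha', ← hb'] at hE
  set V : ℤ[X] := uP ^ s * qP ^ (2 * s) * W *
      (- 2 * ((2 * k + 1 : ℕ) : ℤ[X]) * X * qP + ((2 * k + 1 : ℕ) : ℤ[X]) * X * uP * derivative qP
        - ((3 * k + 2 : ℕ) : ℤ[X]) * uP * qP) with hV
  have hVd : V.natDegree ≤ s + 2 * (2 * s) + p + 3 := by
    have hq' : (derivative qP).natDegree ≤ 1 := (natDegree_derivative_le _).trans (by have := qP_deg; omega)
    have hqd := qP_deg
    have hud := uP_deg
    have hX : (X : ℤ[X]).natDegree ≤ 1 := natDegree_X_le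
    have hn : ∀ n : ℕ, ((n : ℕ) : ℤ[X]).natDegree ≤ 0 := fun n => by simp
    have hn2 : (-2 : ℤ[X]).natDegree ≤ 0 := by simp
    rw [hV]
    refine natDegree_mul_le.trans (add_le_add (natDegree_mul_le.trans (add_le_add (RP_deg _ _) hWd)) ?_)
    refine (natDegree_sub_le _ _).trans (max_le ((natDegree_add_le _ _).trans (max_le ?_ ?_)) ?_)
    · exact natDegree_mul_le.trans (add_le_add (natDegree_mul_le.trans (add_le_add
        (natDegree_mul_le.trans (add_le_add hn2 (hn _))) hX)) hqd)
    · exact natDegree_mul_le.trans (add_le_add (natDegree_mul_le.trans (add_le_add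
        (natDegree_mul_le.trans (add_le_add (hn _) hX)) hud)) hq')
    · exact natDegree_mul_le.trans (add_le_add (natDegree_mul_le.trans (add_le_add
        (hn _) hud)) hqd)
  have hX0 := (PP_zero hE).1
  have hks : 2 * s + 1 ≤ 5 * p := by rw [← hs]; exact Nat.mul_le_mul_right _ (by omega)
  have hmB : (3 * k + 2) * p + 1 ≤ 40 * p := by
    have : (3 * k + 2) * p ≤ 8 * p := Nat.mul_le_mul_right _ (by omega)
    omega
  obtain ⟨z, hz⟩ := E_int (B := 40 * p) (m := (3 * k + 2) * p + 1) hVd (by omega) hmB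
  have hl1 : p ∣ lcmUpto (40 * p) := dvd_lcmUpto (by omega) (by omega)
  obtain ⟨l', hl'⟩ := hl1
  have hl2 : ¬ p ∣ l' := by
    intro hd
    have : p ^ 2 ∣ lcmUpto (40 * p) := by rw [hl', sq]; exact Nat.mul_dvd_mul_left _ hd
    rw [hp.pow_dvd_iff_le_factorization (lcmUpto_ne_zero _), Nat.factorization_lcmUpto _ hp] at this
    have h3 := Nat.pow_le_of_le_log (by omega) this
    nlinarith
  obtain ⟨L', hL'⟩ : p ∣ lcmUpto (8 * N + 3) := dvd_lcmUpto (by omega) (by omega)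
  have hx : ((p - 1).factorial : ℚ) * XX ((6 * N : ℕ) + 1) (toQ (RP (4 * N) (2 * N + j))) =
      - (p * XX (((3 * k + 2) * p + 1 : ℕ)) (toQ V)) := by
    have e1 : toQ ((p : ℤ[X]) * V + ((p - 1).factorial : ℤ[X]) * (X ^ (c' + 1) * RP (4 * N) (2 * N + j)))
      = (p : ℚ) • toQ V + ((p - 1).factorial : ℚ) • (X ^ (c' + 1) * toQ (RP (4 * N) (2 * N + j))) := by
      simp [toQ, smul_eq_C_mul]
    rw [e1, map_add, map_smul, map_smul] at hX0
    have e2 : ((((3 * k + 2) * p : ℕ) : ℤ) + 1) = (((6 * N : ℕ) : ℤ) + 1) + ((c' + 1 : ℕ) : ℤ) := by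
      rw [hc']; push_cast; ring
    have e3 : ((((3 * k + 2) * p + 1 : ℕ) : ℤ)) = ((((3 * k + 2) * p : ℕ) : ℤ) + 1) := by push_cast; ring
    rw [e3]
    nth_rewrite 2 [e2] at hX0
    rw [XX_shift] at hX0
    simp only [smul_eq_mul] at hX0
    linarith
  set x := XX ((6 * N : ℕ) + 1) (toQ (RP (4 * N) (2 * N + j)))
  set y := XX (((3 * k + 2) * p + 1 : ℕ)) (toQ V)
  have hp0 : (p : ℚ) ≠ 0 := by exact_mod_cast hp.ne_zero
  rw [hl'] at hz
  rw [hL'] at hZ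
  push_cast at hz hZ
  have key : (2 ^ N * 10 ^ (40 * p + 1) * (p - 1).factorial * l' : ℤ) * Z = p * (1250 * L' * (-z)) := by
    have : ((2 ^ N * 10 ^ (40 * p + 1) * (p - 1).factorial * l' : ℤ) * Z : ℚ) = p * (1250 * L' * (-z)) := by
      push_cast
      apply mul_left_cancel₀ hp0
      generalize (10 : ℚ) ^ (40 * p + 1) = T at *
      linear_combination (-(p : ℚ) * T * (p - 1).factorial * l') * hZ
        + 1250 * (p : ℚ) ^ 2 * L' * T * l' * hx - 1250 * (p : ℚ) ^ 2 * L' * hz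
    exact_mod_cast this
  have hpi : Prime (p : ℤ) := Nat.prime_iff_prime_int.mp hp
  have hd : (p : ℤ) ∣ (2 ^ N * 10 ^ (40 * p + 1) * (p - 1).factorial * l' : ℤ) * Z := ⟨_, key⟩
  refine (hpi.dvd_or_dvd hd).resolve_left ?_
  intro hd
  rcases hpi.dvd_or_dvd hd with hd | hd
  · rcases hpi.dvd_or_dvd hd with hd | hd
    · rcases hpi.dvd_or_dvd hd with hd | hd
      · have := Int.le_of_dvd (by norm_num) (hpi.dvd_of_dvd_pow hd); omega
      · have := Int.le_of_dvd (by norm_num) (hpi.dvd_of_dvd_pow hd); omega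
    · have := (hp.dvd_factorial).1 (Int.natCast_dvd_natCast.1 hd); omega
  · exact hl2 (Int.natCast_dvd_natCast.1 hd)
end Cancel
end Salikhov

namespace Salikhov
section Forms
open Nat (lcmUpto lcmUpto_ne_zero)
open Polynomial Filter Topology

def TT (a b : ℕ) : Finset ℕ := (Finset.Ioc a b).filter Nat.Prime

lemma TT_log {a b : ℕ} (h : a ≤ b) : ∑ p ∈ TT a b, Real.log p = Chebyshev.theta b - Chebyshev.theta a := by
  unfold Chebyshev.theta TT
  rw [Nat.floor_natCast, Nat.floor_natCast, eq_sub_iff_add_eq', ← Finset.sum_union]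
  · rw [← Finset.filter_union, Finset.Ioc_union_Ioc_eq_Ioc (by omega) h]
  · rw [Finset.disjoint_left]
    intro x hx hy
    simp only [Finset.mem_filter, Finset.mem_Ioc] at hx hy
    omega

def ST (N : ℕ) : Finset ℕ := TT (6 * N / 2) (4 * N / 1) ∪ (TT (6 * N / 5) (4 * N / 3) ∪ TT (6 * N / 8) (4 * N / 5))

lemma ST_mem {N p : ℕ} (h : p ∈ ST N) : p.Prime ∧ ∃ k ≤ 2, 6 * N < (3 * k + 2) * p ∧ (2 * k + 1) * p ≤ 4 * N := by
  simp only [ST, TT, Finset.mem_union, Finset.mem_filter, Finset.mem_Ioc] at h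
  rcases h with h | h | h
  · exact ⟨h.2, 0, by omega, by omega, by omega⟩
  · exact ⟨h.2, 1, by omega, by omega, by omega⟩
  · exact ⟨h.2, 2, by omega, by omega, by omega⟩

noncomputable def MN (N : ℕ) : ℚ := 5000 * lcmUpto (8 * N + 3) / ((∏ p ∈ ST N, p : ℕ) * 2 ^ N)

lemma ST_pos (N : ℕ) : 0 < ∏ p ∈ ST N, p := Finset.prod_pos fun _ hp => (ST_mem hp).1.pos

lemma MN_pos (N : ℕ) : 0 < MN N := by
  have h1 : (0 : ℚ) < lcmUpto (8 * N + 3) := by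
    exact_mod_cast Nat.pos_of_ne_zero (lcmUpto_ne_zero _)
  have h2 : (0 : ℚ) < (∏ p ∈ ST N, p : ℕ) := by exact_mod_cast ST_pos N
  unfold MN; positivity

lemma MN_X {N j : ℕ} (hj : j ≤ 2) (hN : 54 ≤ N) :
    ∃ A : ℤ, MN N * XX ((6 * N : ℕ) + 1) (toQ (RP (4 * N) (2 * N + j))) = A := by
  obtain ⟨Z, hZ⟩ := X_int N j hj
  have hd : ((∏ p ∈ ST N, p : ℕ) : ℤ) ∣ Z := by
    rw [← Int.dvd_natAbs]
    apply Int.natCast_dvd_natCast.2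
    apply Finset.prod_primes_dvd
    · intro p hp; exact (ST_mem hp).1.prime
    · intro p hp
      obtain ⟨hp, k, hk, h1, h2⟩ := ST_mem hp
      rw [← Int.natCast_dvd_natCast, Int.dvd_natAbs]
      have e1 : (3 * k + 2) * p = 3 * (k * p) + 2 * p := by ring
      have e2 : (2 * k + 1) * p = 2 * (k * p) + p := by ring
      have e3 : (3 * k + 2) * p ≤ 8 * p := Nat.mul_le_mul_right _ (by omega)
      exact cancel (r := 2 * N - k * p) hj hp hk (by omega) (by omega) (by omega) (by omega) hZ
  obtain ⟨w, hw⟩ := hd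
  refine ⟨4 * w, ?_⟩
  have h2 : ((∏ p ∈ ST N, p : ℕ) : ℚ) ≠ 0 := by exact_mod_cast (ST_pos N).ne'
  have hw' : (Z : ℚ) = (∏ p ∈ ST N, p : ℕ) * w := by exact_mod_cast congrArg (Int.cast (R := ℚ)) hw
  rw [MN, div_mul_eq_mul_div, div_eq_iff (by positivity)]
  rw [hw'] at hZ
  push_cast
  push_cast at hZ
  linear_combination 4 * hZ

lemma MN_Y {N : ℕ} (j : ℕ) :
    ∃ A : ℤ, MN N * YY ((6 * N : ℕ) + 1) (toQ (RP (4 * N) (2 * N + j))) = 4 * A := by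
  obtain ⟨z, hz⟩ := Y_int N j
  have hd : (∏ p ∈ ST N, p : ℕ) ∣ lcmUpto (8 * N + 3) := by
    apply Finset.prod_primes_dvd
    · intro p hp; exact (ST_mem hp).1.prime
    · intro p hp
      obtain ⟨hp, k, hk, h1, h2⟩ := ST_mem hp
      have e3 : 1 * p ≤ (2 * k + 1) * p  := Nat.mul_le_mul_right _ (by omega)
      exact dvd_lcmUpto hp.one_le (by omega)
  obtain ⟨w, hw⟩ := hd
  refine ⟨1250 * w * z, ?_⟩
  have h2 : ((∏ p ∈ ST N, p : ℕ) : ℚ) ≠ 0 := by exact_mod_cast (ST_pos N).ne'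
  rw [MN, hz, hw, div_mul_eq_mul_div, div_eq_iff (by positivity)]
  push_cast; ring

lemma theta_lim (a b : ℕ) (ha : 0 < a) (hb : 0 < b) :
    Tendsto (fun N : ℕ => Chebyshev.theta ((a * N / b : ℕ) : ℝ) / N) atTop (𝓝 ((a : ℝ) / b)) := by
  have h1 : Tendsto (fun N : ℕ => ((a : ℝ) / b) * (N : ℝ)) atTop atTop :=
    tendsto_natCast_atTop_atTop.const_mul_atTop (by positivity)
  have h2 := (theta_tendsto.comp h1).mul_const ((a : ℝ) / b)
  rw [one_mul] at h2
  refine h2.congr' ?_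
  filter_upwards [eventually_gt_atTop 0] with N hN
  have e : Chebyshev.theta ((a * N / b : ℕ) : ℝ) = Chebyshev.theta (((a : ℝ) / b) * (N : ℝ)) := by
    rw [Chebyshev.theta_eq_theta_coe_floor (((a : ℝ) / b) * (N : ℝ))]
    congr 2
    rw [← Nat.floor_div_eq_div (K := ℝ)]
    congr 1; push_cast; ring
  rw [e]
  have : (0 : ℝ) < N := by exact_mod_cast hN
  have : (0 : ℝ) < a := by exact_mod_cast ha
  have : (0 : ℝ) < b := by exact_mod_cast hb
  simp only [Function.comp]
  field_simp

lemma psi_lim : Tendsto (fun N : ℕ => Chebyshev.psi ((8 * N + 3 : ℕ) : ℝ) / N) atTop (𝓝 8) := by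
  have h1 : Tendsto (fun N : ℕ => (((8 * N + 3 : ℕ)) : ℝ)) atTop atTop := by
    apply tendsto_natCast_atTop_atTop.comp
    exact tendsto_atTop_mono (fun n => by simp only [id]; omega) tendsto_id
  have h3 : Tendsto (fun N : ℕ => 8 + 3 / (N : ℝ)) atTop (𝓝 8) := by
    simpa using (tendsto_const_div_atTop_nhds_zero_nat (3 : ℝ)).const_add 8
  have h2 := (psi_tendsto.comp h1).mul h3
  rw [one_mul] at h2
  refine h2.congr' ?_
  filter_upwards [eventually_gt_atTop 0] with N hN
  have : (0 : ℝ) < N := by exact_mod_cast hN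
  simp only [Function.comp]
  push_cast
  field_simp

lemma log_MN (N : ℕ) : Real.log (MN N : ℝ) = Real.log 5000 + Chebyshev.psi ((8 * N + 3 : ℕ) : ℝ)
    - ((Chebyshev.theta ((4 * N / 1 : ℕ) : ℝ) - Chebyshev.theta ((6 * N / 2 : ℕ) : ℝ)) +
      ((Chebyshev.theta ((4 * N / 3 : ℕ) : ℝ) - Chebyshev.theta ((6 * N / 5 : ℕ) : ℝ)) +
      (Chebyshev.theta ((4 * N / 5 : ℕ) : ℝ) - Chebyshev.theta ((6 * N / 8 : ℕ) : ℝ)))) - N * Real.log 2 := by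
  have hL : ((lcmUpto (8 * N + 3) : ℕ) : ℝ) ≠ 0 := by exact_mod_cast lcmUpto_ne_zero _
  have hP : ((∏ p ∈ ST N, p : ℕ) : ℝ) ≠ 0 := by exact_mod_cast (ST_pos N).ne'
  have hlP : Real.log ((∏ p ∈ ST N, p : ℕ) : ℝ) = ∑ p ∈ ST N, Real.log p := by
    push_cast
    apply Real.log_prod
    intro p hp; exact_mod_cast (ST_mem hp).1.ne_zero
  rw [← TT_log (by omega), ← TT_log (by omega), ← TT_log (by omega), Chebyshev.psi_eq_log_lcmUpto,
    ← Finset.sum_union, ← Finset.sum_union]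
  · change _ = _ + _ - ∑ p ∈ ST N, _ - _
    rw [← hlP, MN]
    push_cast
    push_cast at hP
    rw [Real.log_div (by positivity) (by positivity), Real.log_mul (by norm_num) hL,
      Real.log_mul hP (by positivity), Real.log_pow]
    ring
  · rw [Finset.disjoint_left]
    intro x hx hy
    simp only [TT, Finset.mem_union, Finset.mem_filter, Finset.mem_Ioc] at hx hy
    omega
  · rw [Finset.disjoint_left]
    intro x hx hy
    simp only [TT, Finset.mem_filter, Finset.mem_Ioc] at hx hy
    omega

lemma MN_le : ∀ᶠ N : ℕ in atTop, (MN N : ℝ) ≤ Real.exp (6.124 * N) := by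
  have hl : Tendsto (fun N : ℕ => Real.log (MN N : ℝ) / N) atTop (𝓝 (0 + 8 - ((((4 : ℕ) : ℝ) / (1 : ℕ) - (6 : ℕ) / (2 : ℕ))
      + ((((4 : ℕ) : ℝ) / (3 : ℕ) - (6 : ℕ) / (5 : ℕ)) + (((4 : ℕ) : ℝ) / (5 : ℕ) - (6 : ℕ) / (8 : ℕ)))) - Real.log 2)) := by
    have h0 := tendsto_const_div_atTop_nhds_zero_nat (Real.log 5000)
    refine (((h0.add psi_lim).sub (((theta_lim 4 1 (by norm_num) (by norm_num)).sub
      (theta_lim 6 2 (by norm_num) (by norm_num))).add (((theta_lim 4 3 (by norm_num) (by norm_num)).sub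
      (theta_lim 6 5 (by norm_num) (by norm_num))).add ((theta_lim 4 5 (by norm_num) (by norm_num)).sub
      (theta_lim 6 8 (by norm_num) (by norm_num)))))).sub (tendsto_const_nhds (x := Real.log 2))).congr' ?_
    filter_upwards [eventually_gt_atTop 0] with N hN
    have : (0 : ℝ) < N := by exact_mod_cast hN
    rw [log_MN]
    field_simp
  have hlt := hl.eventually_lt_const (u := 6.124) (by have := Real.log_two_gt_d9; push_cast; linarith)
  filter_upwards [hlt, eventually_gt_atTop 0] with N h hN
  have h0 : (0 : ℝ) < N := by exact_mod_cast hN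
  rw [div_lt_iff₀ h0] at h
  rw [← Real.log_le_iff_le_exp (by exact_mod_cast MN_pos N)]
  exact h.le
end Forms
end Salikhov

namespace Salikhov
section Nonvanish
open Polynomial

lemma YY_shift (m : ℤ) (k : ℕ) (U : ℚ[X]) : YY (m + k) (X ^ k * U) = YY m U := by
  induction U using Polynomial.induction_on' with
  | add p q hp hq => rw [mul_add, map_add, map_add, hp, hq]
  | monomial n a =>
    rw [X_pow_mul_monomial, YY_monomial, YY_monomial]
    congr 3; push_cast; ring

lemma YY_nonneg (U : ℚ[X]) : YY 0 U = 0 := by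
  rw [YY_eq 0 U le_rfl]
  apply Finset.sum_eq_zero
  intro k _
  rw [((xk_spec ((k : ℤ) - 0)).2.1 (by omega)).1]; simp

lemma qP_der : derivative qP = 50 * X - 14 := by
  simp [qP]; ring

lemma brk_id (n k : ℤ[X]) : (50 + 100 * (2 * n + k) + 200 * (4 * n + 1) - 100 * (6 * n)) * uP ^ 3 +
      (-38 - 76 * (2 * n + k) - 176 * (4 * n + 1) - 24 * (6 * n)) * uP ^ 2 +
      (-10 - 20 * (2 * n + k) - 24 * (4 * n + 1) - 4 * (6 * n)) * uP +
      (-2 - 4 * (2 * n + k)) = 64 * (-2 * X * qP - 4 * (2 * n + k) * X * qP +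
       (4 * n + 1) * X * uP * (50 * X - 14) - 6 * n * uP * qP) := by
  unfold uP qP; ring

lemma span_step (N k : ℕ) : PP ((6 * N : ℕ) + 1) (toQ (RP (4 * N) (2 * N) * (
    C (50 + 100 * ((2 * N + k : ℕ) : ℤ) + 200 * (4 * N + 1) - 100 * (6 * N)) * uP ^ (k + 3) +
    C (-38 - 76 * ((2 * N + k : ℕ) : ℤ) - 176 * (4 * N + 1) - 24 * (6 * N)) * uP ^ (k + 2) +
    C (-10 - 20 * ((2 * N + k : ℕ) : ℤ) - 24 * (4 * N + 1) - 4 * (6 * N)) * uP ^ (k + 1) +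
    C (-2 - 4 * ((2 * N + k : ℕ) : ℤ)) * uP ^ k))) = 0 := by
  have := exact1 (6 * N : ℕ) (64 * (uP ^ (2 * N + k) * qP ^ (4 * N + 1)))
    ((dvd_pow_self qP (by omega)).trans ((Dvd.intro_left _ rfl).trans (Dvd.intro_left _ rfl)))
  convert this using 3
  have e0 : derivative (64 : ℤ[X]) = 0 := by simp
  rw [derivative_mul, derivative_mul, e0, derivative_pow qP, qP_der]
  have e1 := uP_pow_der (2 * N + k)
  have brk := brk_id (N : ℤ[X]) (k : ℤ[X])
  simp only [add_tsub_cancel_right, RP]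
  simp only [map_add, map_sub, map_mul, map_natCast, map_ofNat, map_one, map_neg, Nat.cast_add, Nat.cast_mul,
    Nat.cast_ofNat, Nat.cast_one, C_1] at e1 ⊢
  linear_combination (uP ^ (2 * N + k) * qP ^ (4 * N)) * brk - 64 * X * qP ^ (4 * N + 1) * e1

lemma span_all {ℓ : ℚ[X] →ₗ[ℚ] ℚ} {N : ℕ} (h0 : ∀ j ≤ 2, ℓ (toQ (RP (4 * N) (2 * N + j))) = 0)
    (h : ∀ U, PP ((6 * N : ℕ) + 1) U = 0 → ℓ U = 0) (G : ℤ[X]) :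
    ℓ (toQ (RP (4 * N) (2 * N) * G.comp uP)) = 0 := by
  have hk : ∀ k, ℓ (toQ (RP (4 * N) (2 * N) * uP ^ k)) = 0 := by
    intro k
    induction k using Nat.strong_induction_on with
    | _ k ih =>
      rcases Nat.lt_or_ge k 3 with hk | hk
      · have := h0 k (by omega)
        rw [← this]; congr 2; unfold RP; ring
      · obtain ⟨k, rfl⟩ : ∃ k', k = k' + 3 := ⟨k - 3, by omega⟩
        have h1 := h _ (span_step N k)
        have h2 := ih (k + 2) (by omega)
        have h3 := ih (k + 1) (by omega)
        have h4 := ih k (by omega)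
        set R := RP (4 * N) (2 * N)
        have e : ∀ a b c d : ℤ, toQ (R * (C a * uP ^ (k + 3) + C b * uP ^ (k + 2) + C c * uP ^ (k + 1) + C d * uP ^ k))
          = (a : ℚ) • toQ (R * uP ^ (k + 3)) + (b : ℚ) • toQ (R * uP ^ (k + 2)) +
           (c : ℚ) • toQ (R * uP ^ (k + 1)) + (d : ℚ) • toQ (R * uP ^ k) := by
          intro a b c d
          simp only [toQ, smul_eq_C_mul, Polynomial.map_mul, Polynomial.map_add, Polynomial.map_C, Int.coe_castRingHom]
          ring
        rw [e] at h1
        simp only [map_add, map_smul, h2, h3, h4, smul_eq_mul, mul_zero, add_zero] at h1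
        refine (mul_eq_zero.1 h1).resolve_left ?_
        push_cast
        have : (0 : ℚ) ≤ N := by positivity
        have : (0 : ℚ) ≤ k := by positivity
        intro hh
        linarith
  induction G using Polynomial.induction_on' with
  | add p q hp hq =>
    rw [add_comp, mul_add, toQ, Polynomial.map_add, map_add]
    exact (congrArg₂ (· + ·) hp hq).trans (add_zero _)
  | monomial n a =>
    have : toQ (RP (4 * N) (2 * N) * (monomial n a).comp uP) = (a : ℚ) • toQ (RP (4 * N) (2 * N) * uP ^ n) := by
      simp only [toQ, monomial_comp, smul_eq_C_mul, Polynomial.map_mul, Polynomial.map_C, Int.coe_castRingHom]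
      ring
    rw [this, map_smul, hk, smul_zero]

noncomputable def EE (v : ℂ) : ℂ := (1 - 2 * v) * (25 * (1 - 2 * v) ^ 2 + 11)

lemma EE_der (v : ℂ) : HasDerivAt EE (-2 * (75 * (1 - 2 * v) ^ 2 + 11)) v := by
  have h1 : HasDerivAt (fun v : ℂ => 1 - 2 * v) (-2) v := by
    simpa using ((hasDerivAt_id v).const_mul 2).const_sub 1
  have := h1.mul (((h1.pow 2).const_mul 25).add_const 11)
  refine this.congr_deriv ?_
  simp; ring

noncomputable def gP (N : ℕ) : ℤ[X] := (75 * uP + 11) * (25 * uP + 16) ^ (4 * N) * (25 * uP + 11) ^ (4 * N)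

lemma nonv_core (N : ℕ) : PP 0 (toQ (RP (4 * N) (2 * N) * gP N)) ≠ 0 := by
  intro h0
  set P : ℤ[X] := (X ^ 2 + 16) ^ (4 * N) * X ^ (4 * N) with hP
  obtain ⟨W, hW, -⟩ := anti P (P.natDegree + 2) (by omega)
  set K := (P.natDegree + 2 - 1).factorial
  have hK : (0 : ℝ) < K := by exact_mod_cast Nat.factorial_pos _
  have hder : ∀ z : ℂ, HasDerivAt (fun z : ℂ => aeval z W) (K * ((z ^ 2 + 16) ^ (4 * N) * z ^ (4 * N))) z := by
    intro z
    have := Polynomial.hasDerivAt_aeval W z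
    rw [hW] at this
    refine this.congr_deriv ?_
    simp [hP, map_ofNat]
  have h1 : Lam (fun v => (-2 * K * 16 ^ (4 * N) : ℝ) * pf 0 (toQ (RP (4 * N) (2 * N) * gP N)) v) =
      aeval (EE v0) W - aeval (EE (1 / 2)) W := by
    refine lam_ftc (F := fun v => aeval (EE v) W) (continuousOn_const.mul (pf_cont _ _)) ?_
    intro z hz
    refine ((hder (EE z)).comp z (EE_der z)).congr_deriv ?_
    have e1 : EE z ^ 2 + 16 = 16 * (aeval (z * (1 - z)) qP) * (25 * (1 - 2 * z) ^ 2 + 16) := by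
      simp [EE, qP, map_ofNat]; ring
    have e2 : EE z ^ (4 * N) = (aeval (z * (1 - z)) uP) ^ (2 * N) * (25 * (1 - 2 * z) ^ 2 + 11) ^ (4 * N) := by
      have : aeval (z * (1 - z)) uP = (1 - 2 * z) ^ 2 := by simp [uP, map_ofNat]; ring
      rw [this, EE, mul_pow, ← pow_mul]; congr 2; ring
    have e3 : aeval (z * (1 - z)) uP = (1 - 2 * z) ^ 2 := by simp [uP, map_ofNat]; ring
    rw [e1, e2, pf, aeval_toQ]
    simp only [RP, gP, map_mul, map_pow, map_add, map_ofNat, e3]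
    push_cast
    simp only [mul_pow, neg_zero, zpow_zero]
    ring
  rw [lam_mul] at h1
  have h2 := congrArg Complex.im h1
  have h3 : (Lam (pf 0 (toQ (RP (4 * N) (2 * N) * gP N)))).im = 0 := by
    unfold PP Phi at h0; linarith
  rw [Complex.im_ofReal_mul] at h2
  change _ * (Lam (pf 0 _)).im = _ at h2
  rw [h3] at h2
  have e4 : EE v0 = -4 * Complex.I := by
    have := Complex.I_sq
    have h3 : Complex.I ^ 3 = - Complex.I := by rw [pow_succ, this]; ring
    simp only [EE, v0]; ring_nf; rw [this, h3]; ring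
  have e5 : EE (1 / 2) = 0 := by simp [EE]
  rw [e4, e5, Complex.sub_im] at h2
  set φ : ℝ → ℝ := fun t => (aeval (-4 * Complex.I * (t : ℂ)) W).im with hφ
  have hd : ∀ t : ℝ, HasDerivAt φ (-4 * K * ((16 - 16 * t ^ 2) ^ (4 * N) * (16 * t ^ 2) ^ (2 * N))) t := by
    intro t
    have d1 : HasDerivAt (fun t : ℝ => -4 * Complex.I * (t : ℂ)) (-4 * Complex.I) t := by
      simpa using ((hasDerivAt_id t).ofReal_comp).const_mul (-4 * Complex.I)
    have d2 := (hder (-4 * Complex.I * t)).comp_of_eq t d1 rfl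
    have d3 := Complex.imCLM.hasFDerivAt.comp_hasDerivAt t d2
    refine d3.congr_deriv ?_
    have e6 : (K * (((-4 * Complex.I * t) ^ 2 + 16) ^ (4 * N) * (-4 * Complex.I * t) ^ (4 * N)) * (-4 * Complex.I) : ℂ)
       = ((-4 * K * ((16 - 16 * t ^ 2) ^ (4 * N) * (16 * t ^ 2) ^ (2 * N)) : ℝ) : ℂ) * Complex.I := by
      have e7 : (-4 * Complex.I * (t : ℂ)) ^ 2 = - (16 * t ^ 2) := by
        rw [mul_pow, mul_pow, Complex.I_sq]; ring
      have e8 : (-4 * Complex.I * (t : ℂ)) ^ (4 * N) = (16 * (t : ℂ) ^ 2) ^ (2 * N) := by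
        rw [show 4 * N = 2 * (2 * N) by ring, pow_mul, e7, Even.neg_pow ⟨N, by ring⟩]
      rw [e7, e8]; push_cast; ring
    rw [e6, Complex.imCLM_apply, Complex.im_ofReal_mul, Complex.I_im, mul_one]
  obtain ⟨c, hc, hc0⟩ := exists_hasDerivAt_eq_zero (f := φ) zero_lt_one
    (fun t _ => (hd t).continuousAt.continuousWithinAt) (by simp [hφ]; simp at h2; linarith) (fun t _ => hd t)
  have : (0 : ℝ) < 16 - 16 * c ^ 2 := by nlinarith [hc.1, hc.2]
  have : (0 : ℝ) < 16 * c ^ 2 := by have := hc.1; positivity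
  have : 0 < (K : ℝ) * ((16 - 16 * c ^ 2) ^ (4 * N) * (16 * c ^ 2) ^ (2 * N)) := by positivity
  nlinarith

lemma nonvanish (N : ℕ) (ξ : ℚ) : ∃ j ≤ 2, XX ((6 * N : ℕ) + 1) (toQ (RP (4 * N) (2 * N + j))) +
    ξ * YY ((6 * N : ℕ) + 1) (toQ (RP (4 * N) (2 * N + j))) ≠ 0 := by
  by_contra! hcon
  set ℓ : ℚ[X] →ₗ[ℚ] ℚ := XX ((6 * N : ℕ) + 1) + ξ • YY ((6 * N : ℕ) + 1) with hℓ
  have h1 := span_all (ℓ := ℓ) (N := N) hcon (fun U hU => by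
    rw [hℓ, LinearMap.add_apply, LinearMap.smul_apply, (PP_zero hU).1, (PP_zero hU).2]; simp) ((1 - X) ^ (6 * N + 1) * ((75 * X + 11) * (25 * X + 16) ^ (4 * N) * (25 * X + 11) ^ (4 * N)))
  have e : toQ (RP (4 * N) (2 * N) * ((1 - X : ℤ[X]) ^ (6 * N + 1) * ((75 * X + 11) * (25 * X + 16) ^ (4 * N) * (25 * X + 11) ^ (4 * N))).comp uP)
      = (4 : ℚ) ^ (6 * N + 1) • (X ^ (6 * N + 1) * toQ (RP (4 * N) (2 * N) * gP N)) := by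
    have e1 : (RP (4 * N) (2 * N) * ((1 - X : ℤ[X]) ^ (6 * N + 1) * ((75 * X + 11) * (25 * X + 16) ^ (4 * N) * (25 * X + 11) ^ (4 * N))).comp uP)
       = C (4 ^ (6 * N + 1)) * (X ^ (6 * N + 1) * (RP (4 * N) (2 * N) * gP N)) := by
      have e2 : 1 - uP = C 4 * X := by simp [uP]
      simp only [mul_comp, pow_comp, add_comp, sub_comp, one_comp, X_comp, ofNat_comp, e2, gP, mul_pow, map_pow]
      ring
    rw [e1]
    simp [toQ, smul_eq_C_mul]
    exact Or.inl rfl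
  rw [e, map_smul] at h1
  have h2 := (smul_eq_zero.1 h1).resolve_left (by positivity)
  have e3 : ((6 * N : ℕ) + 1 : ℤ) = 0 + ((6 * N + 1 : ℕ) : ℤ) := by push_cast; ring
  rw [hℓ, LinearMap.add_apply, LinearMap.smul_apply, e3, XX_shift, YY_shift, YY_nonneg, smul_zero, add_zero] at h2
  apply nonv_core N
  rw [PP_eq, h2, YY_nonneg]; simp
end Nonvanish
end Salikhov

namespace Salikhov
section Bound
open Polynomial

lemma poly_ineq {s : ℝ} (h0 : 0 ≤ s) (h1 : s ≤ 1) :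
    (1 + 2 * s + 2 * s ^ 2) * (1 - s) ^ 2 * ((5 + 3 * s + 3 * s ^ 2 + s ^ 3) ^ 2 + 4 * s ^ 2 * (1 + s) ^ 2)
      ≤ 0.01549 * (13 + s) ^ 3 := by
  rw [← sub_nonneg]
  rcases le_total s (1 / 2) with h | h
  · obtain ⟨y, hy⟩ : ∃ y, y = 1 / 2 - s := ⟨_, rfl⟩
    have hy0 : 0 ≤ y := by linarith
    obtain ⟨x, hx⟩ : ∃ x, x = s := ⟨_, rfl⟩
    have hx0 : 0 ≤ x := by linarith
    have : 0 ≤ 28900896 / 3125 * x ^ 0 * y ^ 10 + 253574448 / 3125 * x ^ 1 * y ^ 9 + 7741704 / 25 * x ^ 2 * y ^ 8 + 2098737588 / 3125 * x ^ 3 * y ^ 7 + 2833064588 / 3125 * x ^ 4 * y ^ 6 + 2455071524 / 3125 * x ^ 5 * y ^ 5 + 1376686668 / 3125 * x ^ 6 * y ^ 4 + 4164716 / 25 * x ^ 7 * y ^ 3 + 161747568 / 3125 * x ^ 8 * y ^ 2 + 48820528 / 3125 * x ^ 9 * y ^ 1 + 8674618 / 3125 * x ^ 10 * y ^ 0 :=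 by positivity
    refine this.trans_eq ?_
    rw [hy, hx]; ring
  · obtain ⟨y, hy⟩ : ∃ y, y = 1 - s := ⟨_, rfl⟩
    have hy0 : 0 ≤ y := by linarith
    obtain ⟨x, hx⟩ : ∃ x, x = s - 1 / 2 := ⟨_, rfl⟩
    have hx0 : 0 ≤ x := by linarith
    have : 0 ≤ 8674618 / 3125 * x ^ 0 * y ^ 10 + 124671832 / 3125 * x ^ 1 * y ^ 9 + 844409304 / 3125 * x ^ 2 * y ^ 8 + 3364848836 / 3125 * x ^ 3 * y ^ 7 + 8543482948 / 3125 * x ^ 4 * y ^ 6 + 2865699212 / 625 * x ^ 5 * y ^ 5 + 16018262612 / 3125 * x ^ 6 * y ^ 4 + 11737280844 / 3125 * x ^ 7 * y ^ 3 + 5350020176 / 3125 * x ^ 8 * y ^ 2 + 1345572928 / 3125 * x ^ 9 * y ^ 1 + 136014592 / 3125 * x ^ 10 * y ^ 0 := by positivity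
    refine this.trans_eq ?_
    rw [hy, hx]; ring

def gg : ℝ := 0.007745

lemma pf_le {z : ℂ} (N j : ℕ) (hu : ‖aeval (z * (1 - z)) uP‖ ≤ 1) (hy : 1 / 5 ≤ ‖z * (1 - z)‖)
    (hg : ‖aeval (z * (1 - z)) uP‖ * ‖aeval (z * (1 - z)) qP‖ ^ 2 ≤ gg * ‖z * (1 - z)‖ ^ 3) :
    ‖pf ((6 * N : ℕ) + 1) (toQ (RP (4 * N) (2 * N + j))) z‖ ≤ 5 * gg ^ (2 * N) := by
  unfold pf RP
  rw [aeval_toQ, map_mul, map_pow, map_pow, norm_mul, norm_mul, norm_pow, norm_pow, norm_zpow]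
  set u := ‖aeval (z * (1 - z)) uP‖
  set q := ‖aeval (z * (1 - z)) qP‖
  set y := ‖z * (1 - z)‖
  have hy0 : 0 < y := by linarith
  have hu0 : 0 ≤ u := norm_nonneg _
  have e1 : u ^ (2 * N + j) * q ^ (4 * N) = u ^ j * (u * q ^ 2) ^ (2 * N) := by
    rw [mul_pow, ← pow_mul, pow_add]; ring
  have e2 : y ^ (-(((6 * N : ℕ) : ℤ) + 1)) = ((y ^ 3) ^ (2 * N) * y)⁻¹ := by
    rw [zpow_neg, ← pow_mul, ← pow_succ, ← zpow_natCast]; congr 2; push_cast; ring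
  rw [e1, e2, ← div_eq_mul_inv, div_le_iff₀ (by positivity)]
  have h1 : u ^ j ≤ 1 := pow_le_one₀ hu0 hu
  have h2 : (u * q ^ 2) ^ (2 * N) ≤ (gg * y ^ 3) ^ (2 * N) := pow_le_pow_left₀ (by positivity) hg _
  have h3 : 0 ≤ (gg * y ^ 3) ^ (2 * N) := by unfold gg; positivity
  calc _ ≤ 1 * (gg * y ^ 3) ^ (2 * N) := mul_le_mul h1 h2 (by positivity) (by norm_num)
    _ ≤ (gg * y ^ 3) ^ (2 * N) * (5 * y) := by nlinarith
    _ = _ := by rw [mul_pow]; ring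

lemma p1_le {t : ℝ} (h0 : 0 ≤ t) (h1 : t ≤ 1) (N j : ℕ) :
    ‖pf ((6 * N : ℕ) + 1) (toQ (RP (4 * N) (2 * N + j))) (p1 t)‖ ≤ 5 * gg ^ (2 * N) := by
  obtain ⟨x, hx⟩ : ∃ x : ℝ, x = t ^ 2 / 25 := ⟨_, rfl⟩
  have hx0 : 0 ≤ x := by rw [hx]; positivity
  have hx1 : x ≤ 1 / 25 := by rw [hx]; nlinarith
  have ey : p1 t * (1 - p1 t) = (((1 + x) / 4 : ℝ) : ℂ) := by
    have := Complex.I_sq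
    rw [hx]; unfold p1; push_cast; linear_combination (-(t : ℂ) ^ 2 / 100) * this
  have eu : aeval (p1 t * (1 - p1 t)) uP = ((-x : ℝ) : ℂ) := by
    rw [ey]; simp [uP, map_ofNat]; ring
  have eq : aeval (p1 t * (1 - p1 t)) qP = (((25 * x ^ 2 - 6 * x + 1) / 16 : ℝ) : ℂ) := by
    rw [ey]; simp [qP, map_ofNat]; ring
  have ny : ‖p1 t * (1 - p1 t)‖ = (1 + x) / 4 := by
    rw [ey, Complex.norm_real, Real.norm_of_nonneg (by positivity)]
  have nu : ‖aeval (p1 t * (1 - p1 t)) uP‖ = x := by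
    rw [eu, Complex.norm_real, norm_neg, Real.norm_of_nonneg hx0]
  have nq : ‖aeval (p1 t * (1 - p1 t)) qP‖ = (25 * x ^ 2 - 6 * x + 1) / 16 := by
    rw [eq, Complex.norm_real, Real.norm_of_nonneg (by nlinarith)]
  apply pf_le
  · rw [nu]; linarith
  · rw [ny]; linarith
  · rw [nu, ny, nq]
    have a1 : (25 * x ^ 2 - 6 * x + 1) ≤ 1 - 5 * x := by nlinarith
    have a2 : (25 * x ^ 2 - 6 * x + 1) ^ 2 ≤ (1 - 5 * x) ^ 2 := pow_le_pow_left₀ (by nlinarith) a1 2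
    have a3 : x * (1 - 5 * x) ^ 2 ≤ 0.0256 := by
      nlinarith [mul_nonneg hx0 (sub_nonneg.2 hx1), mul_nonneg (sq_nonneg x) (sub_nonneg.2 hx1)]
    have a4 : (1 : ℝ) ≤ (1 + x) ^ 3 := one_le_pow₀ (by linarith)
    unfold gg
    nlinarith [mul_le_mul_of_nonneg_left a2 hx0]

lemma p2_le {s : ℝ} (h0 : 0 ≤ s) (h1 : s ≤ 1) (N j : ℕ) :
    ‖pf ((6 * N : ℕ) + 1) (toQ (RP (4 * N) (2 * N + j))) (p2 s)‖ ≤ 5 * gg ^ (2 * N) := by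
  have I2 := Complex.I_sq
  have I3 : Complex.I ^ 3 = -Complex.I := by rw [pow_succ, I2]; ring
  have I4 : Complex.I ^ 4 = 1 := Complex.I_pow_four
  have ey : p2 s * (1 - p2 s) = (((13 + s) / 50 : ℝ) : ℂ) + ((s * (1 + s) / 50 : ℝ) : ℂ) * Complex.I := by
    unfold p2; push_cast; ring_nf; rw [I2]; ring
  have eu : aeval (p2 s * (1 - p2 s)) uP = (((s / 5 : ℝ) : ℂ) + ((-(1 + s) / 5 : ℝ) : ℂ) * Complex.I) ^ 2 := by
    rw [ey]; simp [uP, map_ofNat]; ring_nf; rw [I2]; ring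
  have eq : aeval (p2 s * (1 - p2 s)) qP = (((1 - s) * (5 + 3 * s + 3 * s ^ 2 + s ^ 3) / 100 : ℝ) : ℂ) +
      ((-(1 - s) * (2 * s * (1 + s)) / 100 : ℝ) : ℂ) * Complex.I := by
    rw [ey]; simp [qP, map_ofNat]; ring_nf; rw [I2]; ring
  have nn : ∀ a b : ℝ, ‖(a : ℂ) + (b : ℂ) * Complex.I‖ ^ 2 = a ^ 2 + b ^ 2 := by
    intro a b; rw [Complex.sq_norm, Complex.normSq_add_mul_I]
  have nu : ‖aeval (p2 s * (1 - p2 s)) uP‖ = (1 + 2 * s + 2 * s ^ 2) / 25 := by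
    rw [eu, norm_pow, nn]; ring
  have nq : ‖aeval (p2 s * (1 - p2 s)) qP‖ ^ 2 = (1 - s) ^ 2 * ((5 + 3 * s + 3 * s ^ 2 + s ^ 3) ^ 2 + 4 * s ^ 2 * (1 + s) ^ 2) / 10000 := by
    rw [eq, nn]; ring
  have ny : (13 + s) / 50 ≤ ‖p2 s * (1 - p2 s)‖ := by
    have := Complex.re_le_norm (p2 s * (1 - p2 s))
    refine le_trans (le_of_eq ?_) this
    rw [ey]; simp
  apply pf_le
  · rw [nu]; nlinarith
  · linarith
  · rw [nu, nq]
    have a1 : ((13 + s) / 50) ^ 3 ≤ ‖p2 s * (1 - p2 s)‖ ^ 3 := pow_le_pow_left₀ (by positivity) ny 3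
    have := poly_ineq h0 h1
    unfold gg
    nlinarith

lemma J_le (N j : ℕ) : |PP ((6 * N : ℕ) + 1) (toQ (RP (4 * N) (2 * N + j)))| ≤ 4 * gg ^ (2 * N) := by
  unfold PP Phi
  set f := pf ((6 * N : ℕ) + 1) (toQ (RP (4 * N) (2 * N + j)))
  have hL : ‖Lam f‖ ≤ 2 * gg ^ (2 * N) * |(1 : ℝ) - 0| := by
    unfold Lam
    apply intervalIntegral.norm_integral_le_of_norm_le_const
    intro t ht
    rw [Set.uIoc_of_le zero_le_one] at ht
    have b1 := p1_le ht.1.le ht.2 N j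
    have b2 := p2_le ht.1.le ht.2 N j
    have c1 : ‖Complex.I / 10‖ ≤ 1 / 10 := by simp
    have c2 : ‖(-1 + Complex.I) / 10‖ ≤ 1 / 5 := by
      rw [norm_div]
      have := norm_add_le (-1 : ℂ) Complex.I
      simp at this ⊢
      linarith
    refine (norm_add_le _ _).trans ?_
    rw [norm_mul, norm_mul]
    have g0 : 0 ≤ 5 * gg ^ (2 * N) := by unfold gg; positivity
    have := mul_le_mul b1 c1 (norm_nonneg _) g0
    have := mul_le_mul b2 c2 (norm_nonneg _) g0
    linarith
  have := Complex.abs_im_le_norm (Lam f)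
  rw [abs_mul]
  simp at hL ⊢
  linarith
end Bound
end Salikhov

namespace Salikhov
section Final
open Polynomial Filter Topology

lemma num1 : gg ^ 2 ≤ Real.exp (-(68 / 7)) := by
  have h1 : Real.exp (68 / 7) ≤ 16670 := by
    rw [← pow_le_pow_iff_left₀ (Real.exp_pos _).le (by norm_num) (n := 7) (by norm_num), ← Real.exp_nat_mul]
    have : Real.exp (((7 : ℕ) : ℝ) * (68 / 7)) = Real.exp 1 ^ 68 := by
      rw [← Real.exp_nat_mul]; congr 1; push_cast; ring
    rw [this]
    refine (pow_le_pow_left₀ (Real.exp_pos _).le Real.exp_one_lt_d9.le 68).trans ?_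
    norm_num
  rw [Real.exp_neg, ← one_div, le_div_iff₀ (Real.exp_pos _)]
  unfold gg
  nlinarith

lemma num2 : (4 ^ 7 * (113 / 16) ^ 4 : ℝ) ≤ Real.exp (123 / 7) := by
  rw [← pow_le_pow_iff_left₀ (by norm_num) (Real.exp_pos _).le (n := 7) (by norm_num), ← Real.exp_nat_mul]
  have : Real.exp (((7 : ℕ) : ℝ) * (123 / 7)) = Real.exp 1 ^ 123 := by
    rw [← Real.exp_nat_mul]; congr 1; push_cast; ring
  rw [this]
  refine le_trans ?_ (pow_le_pow_left₀ (by norm_num) Real.exp_one_gt_d9.le 123)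
  norm_num

lemma form_bound : ∀ᶠ N : ℕ in atTop, ∀ P Q : ℤ, 0 < Q →
    1 ≤ 4 * Real.exp (-((68 / 7 - 6.124) * N)) * Q +
      2 * Real.exp ((6.124 + 123 / 7) * N) * |Q * π - P| := by
  filter_upwards [MN_le, eventually_ge_atTop 54] with N hM hN P Q hQ
  obtain ⟨j, hj, hne⟩ := nonvanish N ((P : ℚ) / (4 * Q))
  obtain ⟨A, hA⟩ := MN_X hj hN
  obtain ⟨B, hB⟩ := MN_Y (N := N) j
  have hJ := J_le N j
  have hY := Y_le N j hj
  rw [PP_eq] at hJ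
  set x := XX ((6 * N : ℕ) + 1) (toQ (RP (4 * N) (2 * N + j)))
  set y := YY ((6 * N : ℕ) + 1) (toQ (RP (4 * N) (2 * N + j)))
  have hQ0 : (0 : ℝ) < Q := by exact_mod_cast hQ
  have hQq : (0 : ℚ) < Q := by exact_mod_cast hQ
  have hM0 := MN_pos N
  have hMr : (0 : ℝ) < MN N := by exact_mod_cast hM0
  have hAr : (MN N : ℝ) * x = A := by exact_mod_cast congrArg (Rat.cast (K := ℝ)) hA
  have hBr : (MN N : ℝ) * y = 4 * B := by exact_mod_cast congrArg (Rat.cast (K := ℝ)) hB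
  have hYr : |(y : ℝ)| ≤ 8 * (4 ^ 7 * (113 / 16) ^ 4) ^ N := by
    have h := (Rat.cast_le (K := ℝ)).2 hY
    push_cast at h
    exact h
  have hint : A * Q + B * P ≠ 0 := by
    intro h0
    apply hne
    have h1 : (A : ℚ) * Q + B * P = 0 := by exact_mod_cast h0
    have : MN N * (4 * Q) * (x + P / (4 * Q) * y) = 0 := by
      field_simp
      linear_combination 4 * (Q : ℚ) * hA + P * hB + 4 * h1
    refine (mul_eq_zero.1 this).resolve_left (by positivity)
  have h1 : (1 : ℝ) ≤ |(A * Q + B * P : ℝ)| := by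
    exact_mod_cast Int.one_le_abs hint
  have h2 : (A * Q + B * P : ℝ) = Q * (MN N * (x + y * (π / 4))) - B * (Q * π - P) := by
    linear_combination (-(Q : ℝ)) * hAr - (Q : ℝ) * π / 4 * hBr
  have h3 : |(Q * (MN N * (x + y * (π / 4))) : ℝ)| ≤ 4 * Real.exp (-((68 / 7 - 6.124) * N)) * Q := by
    rw [abs_mul, abs_mul, abs_of_pos hQ0, abs_of_pos hMr]
    have e1 : gg ^ (2 * N) ≤ Real.exp (-(68 / 7)) ^ N := by
      rw [pow_mul]; exact pow_le_pow_left₀ (sq_nonneg _) num1 _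
    have e2 : Real.exp (-((68 / 7 - 6.124) * N)) = Real.exp (6.124 * N) * Real.exp (-(68 / 7)) ^ N := by
      rw [← Real.exp_nat_mul, ← Real.exp_add]; congr 1; ring
    have e3 := mul_le_mul hM (hJ.trans (mul_le_mul_of_nonneg_left e1 (by norm_num))) (abs_nonneg _)
      (Real.exp_pos _).le
    rw [e2]
    nlinarith
  have h4 : |(B : ℝ)| ≤ 2 * Real.exp ((6.124 + 123 / 7) * N) := by
    have e1 : (4 ^ 7 * (113 / 16) ^ 4 : ℝ) ^ N ≤ Real.exp (123 / 7) ^ N :=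
      pow_le_pow_left₀ (by norm_num) num2 _
    have e2 : Real.exp ((6.124 + 123 / 7) * N) = Real.exp (6.124 * N) * Real.exp (123 / 7) ^ N := by
      rw [← Real.exp_nat_mul, ← Real.exp_add]; congr 1; ring
    have e3 := mul_le_mul hM (hYr.trans (mul_le_mul_of_nonneg_left e1 (by norm_num))) (abs_nonneg _)
      (Real.exp_pos _).le
    have e4 : 4 * |(B : ℝ)| = MN N * |(y : ℝ)| := by
      rw [← abs_of_pos hMr, ← abs_mul, hBr, abs_mul]; norm_num
    rw [e2]
    nlinarith
  calc (1 : ℝ) ≤ _ := h1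
    _ ≤ |(Q * (MN N * (x + y * (π / 4))) : ℝ)| + |(B * (Q * π - P) : ℝ)| := by
      rw [h2]; exact abs_sub _ _
    _ ≤ _ := by
      rw [abs_mul (B : ℝ)]
      exact add_le_add h3 (mul_le_mul_of_nonneg_right h4 (abs_nonneg _))

lemma final_bound : ∀ᶠ q : ℤ in atTop, ∀ p : ℤ,
    1 / (q : ℝ) ^ (7.6063 : ℝ) ≤ |π - (p : ℝ) / (q : ℝ)| := by
  have hlog : Tendsto (fun q : ℤ => Real.log q) atTop atTop :=
    Real.tendsto_log_atTop.comp tendsto_intCast_atTop_atTop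
  set τ : ℝ := 68 / 7 - 6.124 with hτ
  have hτ0 : 0 < τ := by norm_num [hτ]
  have hN : Tendsto (fun q : ℤ => ⌈(Real.log q + Real.log 8) / τ⌉₊) atTop atTop :=
    tendsto_nat_ceil_atTop.comp ((tendsto_atTop_add_const_right _ _ hlog).atTop_div_const hτ0)
  have hbig := hlog.eventually_ge_atTop (200 * (Real.log 4 + (6.124 + 123 / 7) * (Real.log 8 / τ + 1)))
  filter_upwards [hN.eventually form_bound, hbig, eventually_gt_atTop 0, hlog.eventually_ge_atTop 0] with q hF hb hq hl p
  have hq0 : (0 : ℝ) < q := by exact_mod_cast hq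
  set N := ⌈(Real.log q + Real.log 8) / τ⌉₊
  have hl8 : 0 < Real.log 8 := Real.log_pos (by norm_num)
  have hN1 : (Real.log q + Real.log 8) / τ ≤ N := Nat.le_ceil _
  have hN2 : (N : ℝ) < (Real.log q + Real.log 8) / τ + 1 := Nat.ceil_lt_add_one (by positivity)
  have h1 := hF p q hq
  rw [← hτ] at h1
  have h2 : 4 * Real.exp (-(τ * N)) * q ≤ 1 / 2 := by
    rw [div_le_iff₀ hτ0] at hN1
    have : Real.exp (-(τ * N)) ≤ Real.exp (-(Real.log q + Real.log 8)) := Real.exp_le_exp.2 (by linarith)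
    rw [← Real.log_mul hq0.ne' (by norm_num), Real.exp_neg (Real.log _), Real.exp_log (by positivity)] at this
    calc 4 * Real.exp (-(τ * N)) * q ≤ 4 * ((q : ℝ) * 8)⁻¹ * q := by gcongr
      _ = 1 / 2 := by field_simp; norm_num
  have h3 : 4 * Real.exp ((6.124 + 123 / 7) * N) ≤ (q : ℝ) ^ (6.6063 : ℝ) := by
    rw [Real.rpow_def_of_pos hq0]
    nth_rewrite 1 [← Real.exp_log (show (0 : ℝ) < 4 by norm_num)]
    rw [← Real.exp_add]
    apply Real.exp_le_exp.2
    have e1 : (6.124 + 123 / 7 : ℝ) * N ≤ (6.124 + 123 / 7) * ((Real.log q + Real.log 8) / τ + 1) := by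
      gcongr
    have e2 : (6.124 + 123 / 7 : ℝ) * ((Real.log q + Real.log 8) / τ + 1) =
      (6.124 + 123 / 7) / τ * Real.log q + (6.124 + 123 / 7) * (Real.log 8 / τ + 1) := by
      field_simp
      ring
    have e3 : (6.124 + 123 / 7) / τ ≤ 6.601 := by
      rw [div_le_iff₀ hτ0, hτ]; norm_num
    have e4 := mul_le_mul_of_nonneg_right e3 hl
    linarith
  have h4 : 1 ≤ (q : ℝ) ^ (6.6063 : ℝ) * |q * π - p| := by
    have := mul_le_mul_of_nonneg_right h3 (abs_nonneg ((q : ℝ) * π - p))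
    linarith
  have h5 : |π - (p : ℝ) / q| = |(q : ℝ) * π - p| / q := by
    rw [← abs_of_pos hq0, ← abs_div, abs_of_pos hq0]; congr 1; field_simp
  have h6 : (q : ℝ) ^ (7.6063 : ℝ) = (q : ℝ) ^ (6.6063 : ℝ) * q := by
    rw [← Real.rpow_add_one hq0.ne']; norm_num
  have h7 : 0 < (q : ℝ) ^ (6.6063 : ℝ) := Real.rpow_pos_of_pos hq0 _
  rw [h5, h6, div_le_div_iff₀ (by positivity) hq0]
  nlinarith
end Final
end Salikhov


/-- Salikhov's bound: there exists `q₀` such that for all integers `p` and `q`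
with `q ≥ q₀`, `|π − p/q| ≥ 1/q^(7.6063)`. -/
theorem salikhov_pi_bound :
    ∃ q₀ : ℤ, ∀ p q : ℤ, q₀ ≤ q →
      1 / (q : ℝ) ^ (7.6063 : ℝ) ≤ |π - (p : ℝ) / (q : ℝ)| := by
  exact (Filter.eventually_atTop.1 Salikhov.final_bound).imp fun q₀ h p q hq => h q hq p
end
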